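/- For every natural number n, the number of permutations of length n+1 avoiding all three of the patterns 2143, 3142, and 246135 equals the n-th large Schröder number, i.e., equals the sum over k from 0 to n of binomial(n+k, n−k) times the k-th Catalan number. -/

import Mathlib

/-- `π` contains the pattern `σ`: there is a strictly increasing choice of positions
on which `π` is order-isomorphic to `σ`. -/
def Contains {n k : ℕ} (π : Equiv.Perm (Fin n)) (σ : Equiv.Perm (Fin k)) : Prop :=
  ∃ f : Fin k → Fin n, StrictMono f ∧ ∀ a b : Fin k, σ a < σ b ↔ π (f a) < π (f b)

/-- `π` avoids the pattern `σ`. -/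
def Avoids {n k : ℕ} (π : Equiv.Perm (Fin n)) (σ : Equiv.Perm (Fin k)) : Prop :=
  ¬ Contains π σ
noncomputable def p2143 : Equiv.Perm (Fin 4) := Equiv.ofBijective ![1, 0, 3, 2] (by decide)
noncomputable def p3142 : Equiv.Perm (Fin 4) := Equiv.ofBijective ![2, 0, 3, 1] (by decide)
noncomputable def p246135 : Equiv.Perm (Fin 6) := Equiv.ofBijective ![1, 3, 5, 0, 2, 4] (by decide)

open PowerSeries in
/-- The linear system satisfied by the generating functions determines `E 0`: the solution is
`E r = γ ^ r (1 + F)`, `TM r = γ ^ r F` and `V r = γ ^ (r + 1) F` for `1 ≤ r`. -/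
theorem system_solution {E TM V Y : ℕ → ℤ⟦X⟧} {F γ : ℤ⟦X⟧}
    (hγ : γ = X + F * γ) (hF : F = γ * (1 + F))
    (hE₀ : E 0 = 1 + E 1)
    (hE : ∀ r, E (r + 1) = X * E r + E 0 * TM (r + 1))
    (hTM : ∀ r, TM (r + 1) = X * E (r + 1) + E (r + 1) * V 1 + V (r + 1))
    (hV : ∀ r, V (r + 1) = E 0 * Y (r + 1))
    (hY : ∀ r, Y (r + 1) + X * TM (r + 2) = V (r + 2) + X * TM (r + 1))
    (hVX : ∀ r, X ^ r ∣ V r) : E 0 = 1 + F := by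
  have hXγ : (X : ℤ⟦X⟧) ∣ γ := by
    have h0 := congrArg constantCoeff hγ
    have h1 := congrArg constantCoeff hF
    simp only [map_add, map_mul, constantCoeff_X, map_one] at h0 h1
    rw [X_dvd_iff]
    by_contra hne
    have : constantCoeff F = 1 := by
      have : constantCoeff γ * (constantCoeff F - 1) = 0 := by linarith
      rcases mul_eq_zero.mp this with h | h
      · exact absurd h hne
      · linarith
    rw [this] at h1
    omega
  have hXF : (X : ℤ⟦X⟧) ∣ F := hF ▸ Dvd.dvd.mul_right hXγ _
  have key : ∀ n : ℕ, ∀ r : ℕ, X ^ n ∣ E (r + 1) - γ ^ (r + 1) * (1 + F) ∧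
      X ^ n ∣ TM (r + 1) - F * γ ^ (r + 1) ∧ X ^ n ∣ V (r + 1) - γ ^ (r + 2) * F := by
    intro n
    induction n with
    | zero => simp
    | succ n ih =>
      have hδ₀ : X ^ n ∣ E 0 - (1 + F) := by
        have h := (ih 0).1
        rw [zero_add, pow_one, ← hF] at h
        rwa [hE₀, add_sub_add_left_eq_sub]
      have hXmul : ∀ {a b : ℤ⟦X⟧}, X ^ n ∣ a → X ∣ b → X ^ (n + 1) ∣ a * b := by
        intro a b ha hb
        rw [pow_succ]
        exact mul_dvd_mul ha hb
      have hVn : ∀ d r : ℕ, n ≤ r + d → X ^ (n + 1) ∣ V (r + 1) - γ ^ (r + 2) * F := by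
        intro d
        induction d with
        | zero =>
          intro r hr
          refine dvd_sub ((pow_dvd_pow X (by omega)).trans (hVX (r + 1))) ?_
          exact Dvd.dvd.mul_right
            ((pow_dvd_pow X (by omega : n + 1 ≤ r + 2)).trans (pow_dvd_pow_of_dvd hXγ _)) _
        | succ d ihd =>
          intro r hr
          have h1 := ihd (r + 1) (by omega)
          have h2 := hXmul (ih r).2.1 (dvd_refl X)
          have h3 := hXmul (ih (r + 1)).2.1 (dvd_refl X)
          have h4 := hXmul hδ₀ (hXγ.trans (dvd_pow_self γ (by omega : r + 3 ≠ 0)))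
          have e : V (r + 1) - γ ^ (r + 2) * F =
              E 0 * ((V (r + 2) - γ ^ (r + 3) * F) + (TM (r + 1) - F * γ ^ (r + 1)) * X
                - (TM (r + 2) - F * γ ^ (r + 2)) * X) + (E 0 - (1 + F)) * γ ^ (r + 3) := by
            have hy : Y (r + 1) = V (r + 2) + X * TM (r + 1) - X * TM (r + 2) := by
              rw [← hY]; ring
            rw [hV, hy]
            have hx : X = γ - F * γ := by linear_combination -hγ
            rw [hx]
            linear_combination γ^(r+2) * (E 0 * (1 - F) - 1) * hF
          rw [e]
          exact dvd_add (Dvd.dvd.mul_left (dvd_sub (dvd_add h1 h2) h3) _) h4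
      have hTMn : ∀ r, X ^ (n + 1) ∣ TM (r + 1) - F * γ ^ (r + 1) := by
        intro r
        have h1 := hXmul (ih r).1 (dvd_refl X)
        have h2 := hXmul (ih r).1 (hXγ.trans (Dvd.intro (γ * F) (by ring) : γ ∣ γ ^ 2 * F))
        have h3 := hVn n 0 (by omega)
        have h4 := hVn n r (by omega)
        have e : TM (r + 1) - F * γ ^ (r + 1) =
            (E (r + 1) - γ ^ (r + 1) * (1 + F)) * X
              + (E (r + 1) - γ ^ (r + 1) * (1 + F)) * (γ ^ 2 * F)
              + E (r + 1) * (V (0 + 1) - γ ^ (0 + 2) * F) + (V (r + 1) - γ ^ (r + 2) * F) := by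
          rw [hTM]
          have hx : X = γ - F * γ := by linear_combination -hγ
          rw [hx]
          linear_combination - γ^(r+1) * (1 + γ * F) * hF
        rw [e]
        exact dvd_add (dvd_add (dvd_add h1 h2) (Dvd.dvd.mul_left h3 _)) h4
      have hEn : ∀ r, X ^ (n + 1) ∣ E (r + 1) - γ ^ (r + 1) * (1 + F) := by
        intro r
        have h1 : X ^ (n + 1) ∣ (E r - γ ^ r * (1 + F)) * X := by
          refine hXmul ?_ (dvd_refl X)
          cases r with
          | zero => simpa using hδ₀
          | succ r => exact (ih r).1
        have h2 := hTMn r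
        have h3 := hXmul hδ₀ (hXF.trans (Dvd.intro _ rfl : F ∣ F * γ ^ (r + 1)))
        have e : E (r + 1) - γ ^ (r + 1) * (1 + F) =
            (E r - γ ^ r * (1 + F)) * X + E 0 * (TM (r + 1) - F * γ ^ (r + 1))
              + (E 0 - (1 + F)) * (F * γ ^ (r + 1)) := by
          rw [hE]
          linear_combination - γ^r * (1 + F) * hγ
        rw [e]
        exact dvd_add (dvd_add h1 (Dvd.dvd.mul_left h2 _)) h3
      exact fun r => ⟨hEn r, hTMn r, hVn n r (by omega)⟩
  have h1 : E 1 - F = 0 := by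
    ext n
    have h := (key (n + 1) 0).1
    rw [zero_add, pow_one, ← hF] at h
    simpa using (X_pow_dvd_iff.mp h) n (by omega)
  rw [hE₀, sub_eq_zero.mp h1]

/-- The sum `∑ₖ C(n + k, n - k) Cₖ`, where `Cₖ` is the `k`-th Catalan number. -/
def schroederSum (n : ℕ) : ℕ :=
  ∑ k ∈ Finset.range (n + 1), Nat.choose (n + k) (n - k) * catalan k

open PowerSeries in
/-- The functional equation `S = 1 + X S + X S ^ 2` of the large Schröder numbers. -/
theorem mk_schroederSum :
    (mk fun n => (schroederSum n : ℤ)) = 1 + X * (mk fun n => (schroederSum n : ℤ))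
      + X * (mk fun n => (schroederSum n : ℤ)) ^ 2 := by
  set G : ℤ⟦X⟧ := mk 1 with hG
  have hG1 : G * (1 - X) = 1 := mk_one_mul_one_sub_eq_one ℤ
  set C : ℤ⟦X⟧ := catalanSeries.map (Nat.castRingHom ℤ) with hC
  have hC1 : C = 1 + X * C ^ 2 := by
    have h := congrArg (PowerSeries.map (Nat.castRingHom ℤ)) catalanSeries_sq_mul_X_add_one
    simp only [map_add, map_mul, map_pow, map_one, PowerSeries.map_X] at h
    rw [← hC] at h
    linear_combination -h
  have ha : HasSubst (X * G ^ 2 : ℤ⟦X⟧) := HasSubst.of_constantCoeff_zero' (by simp)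
  set D : ℤ⟦X⟧ := C.subst (X * G ^ 2 : ℤ⟦X⟧) with hD
  have hD1 : D = 1 + X * G ^ 2 * D ^ 2 := by
    have h := congrArg (substAlgHom ha (R := ℤ)) hC1
    simp only [map_add, map_mul, map_pow, map_one, substAlgHom_X, coe_substAlgHom] at h
    exact h
  have hS : (mk fun n => (schroederSum n : ℤ)) = G * D := by
    ext n
    have hGa : ∀ d, coeff n (G * (X * G ^ 2) ^ d) =
        if d ≤ n then ((n + d).choose (n - d) : ℤ) else 0 := by
      intro d
      have : G * (X * G ^ 2) ^ d = X ^ d * G ^ (2 * d + 1) := by ring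
      rw [this, coeff_X_pow_mul', hG, mk_one_pow_eq_mk_choose_add]
      split_ifs with h
      · rw [coeff_mk, Nat.choose_symm_of_eq_add (by omega : n + d = (n - d) + 2 * d)]
        congr 2; omega
      · rfl
    have hDc : ∀ j, j ≤ n → coeff j D =
        ∑ d ∈ Finset.range (n + 1), (catalan d : ℤ) * coeff j ((X * G ^ 2) ^ d) := by
      intro j hj
      rw [hD, coeff_subst' ha, finsum_eq_sum_of_support_subset (s := Finset.range (n + 1))]
      · simp [hC]
      · intro d hd
        by_contra hd'
        apply hd
        have : coeff j ((X * G ^ 2 : ℤ⟦X⟧) ^ d) = 0 := by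
          rw [mul_pow, coeff_X_pow_mul', if_neg]
          simp at hd'; omega
        simp [this]
    rw [coeff_mk, coeff_mul]
    have : ∀ p ∈ Finset.HasAntidiagonal.antidiagonal n, coeff p.1 G * coeff p.2 D =
        ∑ d ∈ Finset.range (n + 1),
          (catalan d : ℤ) * (coeff p.1 G * coeff p.2 ((X * G ^ 2) ^ d)) := by
      intro p hp
      rw [hDc p.2 (by simp at hp; omega), Finset.mul_sum]
      exact Finset.sum_congr rfl fun d _ => by ring
    rw [Finset.sum_congr rfl this, Finset.sum_comm, schroederSum]
    push_cast
    refine Finset.sum_congr rfl fun d hd => ?_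
    rw [← Finset.mul_sum, ← coeff_mul, hGa, if_pos (by simp at hd; omega)]
    ring
  rw [hS]
  linear_combination hD1 + D * hG1

open PowerSeries in
theorem eq_schroederSum_of_recurrences {e tm v y : ℕ → ℕ → ℕ}
    (he₀₀ : e 0 0 = 1) (he₀ : ∀ n, e 0 (n + 1) = e 1 (n + 1)) (he_zero : ∀ r, e (r + 1) 0 = 0)
    (htm_zero : ∀ r, tm r 0 = 0) (hv_zero : ∀ r n, n < r → v r n = 0)
    (hy_zero : ∀ r, y r 0 = 0)
    (he : ∀ r n, e (r + 1) (n + 1) =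
      e r n + ∑ p ∈ Finset.HasAntidiagonal.antidiagonal (n + 1), e 0 p.1 * tm (r + 1) p.2)
    (htm : ∀ r n, tm (r + 1) (n + 1) =
      e (r + 1) n + ∑ p ∈ Finset.HasAntidiagonal.antidiagonal (n + 1), e (r + 1) p.1 * v 1 p.2 +
        v (r + 1) (n + 1))
    (hv : ∀ r n, v (r + 1) n =
      ∑ p ∈ Finset.HasAntidiagonal.antidiagonal n, e 0 p.1 * y (r + 1) p.2)
    (hy : ∀ r n, y (r + 1) (n + 1) + tm (r + 2) n = v (r + 2) (n + 1) + tm (r + 1) n) (n : ℕ) :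
    e 0 (n + 1) = schroederSum n := by
  set S : ℤ⟦X⟧ := mk fun n => (schroederSum n : ℤ) with hS
  have hS1 : S = 1 + X * S + X * S ^ 2 := mk_schroederSum
  obtain ⟨u, hu⟩ : IsUnit (1 - X * S) := by simp [isUnit_iff_constantCoeff]
  have hinv : (1 - X * S) * (↑u⁻¹ : ℤ⟦X⟧) = 1 := by rw [← hu]; simp
  have hs := system_solution (E := fun r => mk fun n => (e r n : ℤ))
    (TM := fun r => mk fun n => (tm r n : ℤ)) (V := fun r => mk fun n => (v r n : ℤ))
    (Y := fun r => mk fun n => (y r n : ℤ)) (F := X * S) (γ := X * (↑u⁻¹ : ℤ⟦X⟧))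
    (by linear_combination X * hinv)
    (by linear_combination (- X * S) * hinv + X * (↑u⁻¹ : ℤ⟦X⟧) * hS1)
    ?_ ?_ ?_ ?_ ?_ ?_
  · have := congrArg (coeff (n + 1)) hs
    simpa [coeff_succ_X_mul, hS, coeff_one] using this
  · ext (_ | n)
    · simp [he₀₀, he_zero]
    · simp [coeff_one, he₀]
  · intro r
    ext (_ | n)
    · simp [he_zero, htm_zero]
    · simp only [map_add, coeff_succ_X_mul]
      simp [coeff_mul, he]
  · intro r
    ext (_ | n)
    · simp [he_zero, htm_zero, hv_zero]
    · simp only [map_add, coeff_succ_X_mul]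
      simp [coeff_mul, htm]
  · intro r
    ext n
    simp [coeff_mul, hv]
  · intro r
    ext (_ | n)
    · simp [hy_zero, hv_zero]
    · have := hy r n
      simp only [map_add, coeff_succ_X_mul, coeff_mk]
      exact_mod_cast this
  · intro r
    rw [X_pow_dvd_iff]
    intro m hm
    simp [hv_zero r m hm]

/-- `p` restricts to a permutation of `{0, …, n - 1}` and vanishes from `n` on. -/
structure IsPermOn (n : ℕ) (p : ℕ → ℕ) : Prop where
  lt : ∀ i, i < n → p i < n
  inj : ∀ i j, i < n → j < n → p i = p j → i = j
  eq_zero : ∀ i, n ≤ i → p i = 0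

/-- `p` is a permutation of `{0, …, n - 1}` avoiding `2143`, `3142` and `246135`. -/
structure IsGood (n : ℕ) (p : ℕ → ℕ) : Prop extends IsPermOn n p where
  four : ∀ i j k l, i < j → j < k → k < l → l < n →
    ¬ (p j < p i ∧ p j < p l ∧ p i < p k ∧ p l < p k)
  six : ∀ a b c d e f, a < b → b < c → c < d → d < e → e < f → f < n →
    ¬ (p d < p a ∧ p a < p e ∧ p e < p b ∧ p b < p f ∧ p f < p c)

/-- The first `r` entries of `p` increase, and no pattern `2413` has its first two entries among
them and its last two after them. -/
structure HasPrefix (r n : ℕ) (p : ℕ → ℕ) : Prop where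
  le : r ≤ n
  mono : ∀ i j, i < j → j < r → p i < p j
  sep : ∀ a b c d, a < r → b < r → r ≤ c → c < d → d < n → ¬ (p c < p a ∧ p a < p d ∧ p d < p b)

/-- The value `1` occurs to the left of the value `0`. -/
def OneBeforeZero (n : ℕ) (p : ℕ → ℕ) : Prop :=
  ∃ i j, i < j ∧ j < n ∧ p i = 1 ∧ p j = 0

theorem IsPermOn.surj {n : ℕ} {p : ℕ → ℕ} (hp : IsPermOn n p) {v : ℕ} (hv : v < n) :
    ∃ i, i < n ∧ p i = v := by
  have h := Finset.surj_on_of_inj_on_of_card_le (s := Finset.range n) (t := Finset.range n)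
    (fun i _ => p i) (fun i hi => by simpa using hp.lt i (by simpa using hi))
    (fun i j hi hj h => hp.inj i j (by simpa using hi) (by simpa using hj) h) le_rfl v
    (by simpa using hv)
  obtain ⟨i, hi, h⟩ := h
  exact ⟨i, by simpa using hi, h.symm⟩

/-- A set of positions whose values dominate all the others carries exactly the top values. -/
theorem IsPermOn.top_values {n : ℕ} {p : ℕ → ℕ} (hp : IsPermOn n p) {I : Finset ℕ}
    (hI : I ⊆ Finset.range n) (h : ∀ i ∈ I, ∀ j, j < n → j ∉ I → p j < p i) :
    (∀ i ∈ I, n - I.card ≤ p i) ∧ ∀ j, j < n → j ∉ I → p j < n - I.card := by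
  constructor
  · intro i hi
    have hc := Finset.card_le_card_of_injOn (s := Finset.range n \ I) (t := Finset.range (p i)) p
      (fun j hj => by
        simp only [Finset.coe_sdiff, Finset.coe_range, Set.mem_sdiff, Set.mem_Iio,
          Finset.mem_coe] at hj
        simpa using h i hi j hj.1 hj.2)
      (fun j hj k hk => hp.inj j k (by simp at hj; exact hj.1) (by simp at hk; exact hk.1))
    rw [Finset.card_sdiff_of_subset hI] at hc
    simpa using hc
  · intro j hj hjI
    have hc := Finset.card_le_card_of_injOn (s := I) (t := Finset.Ioo (p j) n) p
      (fun i hi => by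
        have := h i hi j hj hjI
        have := hp.lt i (by simpa using hI hi)
        simp; omega)
      (fun i hi k hk => hp.inj i k (by simpa using hI hi) (by simpa using hI hk))
    have := hp.lt j hj
    simp at hc
    omega

theorem IsGood.of_embedding {n m : ℕ} {p q : ℕ → ℕ} (hp : IsGood n p) (hq : IsPermOn m q)
    (φ : ℕ → ℕ) (hφ : ∀ i j, i < j → j < m → φ i < φ j) (hφn : ∀ i, i < m → φ i < n)
    (hord : ∀ i j, i < m → j < m → q i < q j → p (φ i) < p (φ j)) : IsGood m q where
  toIsPermOn := hq
  four i j k l hij hjk hkl hl h :=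
    hp.four (φ i) (φ j) (φ k) (φ l) (hφ _ _ hij (by omega)) (hφ _ _ hjk (by omega))
      (hφ _ _ hkl hl) (hφn _ hl)
      ⟨hord _ _ (by omega) (by omega) h.1, hord _ _ (by omega) (by omega) h.2.1,
        hord _ _ (by omega) (by omega) h.2.2.1, hord _ _ (by omega) (by omega) h.2.2.2⟩
  six a b c d e f hab hbc hcd hde hef hf h :=
    hp.six (φ a) (φ b) (φ c) (φ d) (φ e) (φ f) (hφ _ _ hab (by omega)) (hφ _ _ hbc (by omega))
      (hφ _ _ hcd (by omega)) (hφ _ _ hde (by omega)) (hφ _ _ hef hf) (hφn _ hf)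
      ⟨hord _ _ (by omega) (by omega) h.1, hord _ _ (by omega) (by omega) h.2.1,
        hord _ _ (by omega) (by omega) h.2.2.1, hord _ _ (by omega) (by omega) h.2.2.2.1,
        hord _ _ (by omega) (by omega) h.2.2.2.2⟩

theorem IsPermOn.finite (n : ℕ) : {p | IsPermOn n p}.Finite := by
  refine Set.Finite.of_finite_image (f := fun p (i : Fin n) => p i) ?_ ?_
  · refine (Set.Finite.pi' (fun _ : Fin n => Set.finite_Iio n)).subset ?_
    rintro _ ⟨p, hp, rfl⟩ i
    exact hp.lt i i.2
  · intro p hp q hq h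
    funext i
    by_cases hi : i < n
    · exact congrFun h ⟨i, hi⟩
    · rw [hp.eq_zero i (by omega), hq.eq_zero i (by omega)]

theorem ncard_eq_sum_of_decomposition {α : Type*} (n : ℕ) {S : Set α} {A B : ℕ → Set α}
    (hA : ∀ k, (A k).Finite) (hB : ∀ k, (B k).Finite) (hS : S.Finite)
    (φ : ℕ → ℕ → α → α → α)
    (hmaps : ∀ k m a b, k + m = n → a ∈ A k → b ∈ B m → φ k m a b ∈ S)
    (hinj : ∀ k m a b k' m' a' b', k + m = n → a ∈ A k → b ∈ B m → k' + m' = n → a' ∈ A k' →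
      b' ∈ B m' → φ k m a b = φ k' m' a' b' → k = k' ∧ a = a' ∧ b = b')
    (hsurj : ∀ s ∈ S, ∃ k m a b, k + m = n ∧ a ∈ A k ∧ b ∈ B m ∧ φ k m a b = s) :
    S.ncard = ∑ p ∈ Finset.HasAntidiagonal.antidiagonal n, (A p.1).ncard * (B p.2).ncard := by
  classical
  rw [Set.ncard_eq_toFinset_card S hS]
  have : ∀ p ∈ Finset.HasAntidiagonal.antidiagonal n, (A p.1).ncard * (B p.2).ncard =
      ((hA p.1).toFinset ×ˢ (hB p.2).toFinset).card := by
    intro p _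
    rw [Finset.card_product, Set.ncard_eq_toFinset_card _ (hA p.1),
      Set.ncard_eq_toFinset_card _ (hB p.2)]
  rw [Finset.sum_congr rfl this, ← Finset.card_sigma]
  symm
  refine Finset.card_bij (fun x _ => φ x.1.1 x.1.2 x.2.1 x.2.2) ?_ ?_ ?_
  · rintro ⟨⟨k, m⟩, a, b⟩ h
    simp at h ⊢
    exact hmaps k m a b h.1 h.2.1 h.2.2
  · rintro ⟨⟨k, m⟩, a, b⟩ h ⟨⟨k', m'⟩, a', b'⟩ h' he
    simp at h h'
    obtain ⟨rfl, rfl, rfl⟩ := hinj k m a b k' m' a' b' h.1 h.2.1 h.2.2 h'.1 h'.2.1 h'.2.2 he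
    obtain rfl : m = m' := by omega
    rfl
  · intro s hs
    obtain ⟨k, m, a, b, hkm, ha, hb, rfl⟩ := hsurj s (by simpa using hs)
    exact ⟨⟨⟨k, m⟩, a, b⟩, by simp [hkm, ha, hb], rfl⟩

/-- Insert the permutation `H` of length `k`, as a block of the largest values, at position `s` of
the permutation `σ` of length `m`. -/
def topInsert (s k m : ℕ) (H σ : ℕ → ℕ) (i : ℕ) : ℕ :=
  if i < s then σ i else if i < s + k then H (i - s) + m else σ (i - k)

theorem topInsert_of_lt {s k m : ℕ} {H σ : ℕ → ℕ} {i : ℕ} (h : i < s) :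
    topInsert s k m H σ i = σ i := by
  grind [topInsert]

theorem topInsert_of_mem {s k m : ℕ} {H σ : ℕ → ℕ} {i : ℕ} (h : s ≤ i) (h' : i < s + k) :
    topInsert s k m H σ i = H (i - s) + m := by
  grind [topInsert]

theorem topInsert_of_ge {s k m : ℕ} {H σ : ℕ → ℕ} {i : ℕ} (h : s + k ≤ i) :
    topInsert s k m H σ i = σ (i - k) := by
  grind [topInsert]

theorem topInsert_mem_iff {s k m : ℕ} {H σ : ℕ → ℕ} {i : ℕ} (hσ : IsPermOn m σ) (hs : s ≤ m)
    (hi : i < m + k) : m ≤ topInsert s k m H σ i ↔ s ≤ i ∧ i < s + k := by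
  have h1 := hσ.lt i
  have h2 := hσ.lt (i - k)
  grind [topInsert]

theorem topInsert_of_not_mem {s k m : ℕ} {H σ : ℕ → ℕ} {i : ℕ} (h : ¬ (s ≤ i ∧ i < s + k)) :
    topInsert s k m H σ i = σ (if i < s then i else i - k) := by
  grind [topInsert]

theorem isPermOn_topInsert {s k m : ℕ} {H σ : ℕ → ℕ} (hH : IsPermOn k H) (hσ : IsPermOn m σ)
    (hs : s ≤ m) : IsPermOn (k + m) (topInsert s k m H σ) where
  lt i hi := by
    have h1 := hσ.lt i
    have h2 := hσ.lt (i - k)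
    have h3 := hH.lt (i - s)
    grind [topInsert]
  inj i j hi hj h := by
    have h1 := topInsert_mem_iff (H := H) (k := k) (i := i) hσ hs (by omega)
    have h2 := topInsert_mem_iff (H := H) (k := k) (i := j) hσ hs (by omega)
    by_cases hi' : s ≤ i ∧ i < s + k
    · have hj' : s ≤ j ∧ j < s + k := by rw [← h2, ← h, h1]; exact hi'
      rw [topInsert_of_mem hi'.1 hi'.2, topInsert_of_mem hj'.1 hj'.2] at h
      have := hH.inj (i - s) (j - s) (by omega) (by omega) (by omega)
      omega
    · have hj' : ¬ (s ≤ j ∧ j < s + k) := by rw [← h2, ← h, h1]; exact hi'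
      rw [topInsert_of_not_mem hi', topInsert_of_not_mem hj'] at h
      have := hσ.inj (if i < s then i else i - k) (if j < s then j else j - k)
        (by split_ifs <;> omega) (by split_ifs <;> omega) h
      split_ifs at this <;> omega
  eq_zero i hi := by
    rw [topInsert_of_ge (by omega), hσ.eq_zero _ (by omega)]

theorem isGood_topInsert {s k m : ℕ} {H σ : ℕ → ℕ} (hH : IsGood k H) (hσ : IsGood m σ)
    (hs : HasPrefix s m σ) : IsGood (k + m) (topInsert s k m H σ) where
  toIsPermOn := isPermOn_topInsert hH.toIsPermOn hσ.toIsPermOn hs.le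
  four i j c l hij hjc hcl hl := by
    rintro ⟨h1, h2, h3, h4⟩
    have hsm := hs.le
    have mem := fun x hx => topInsert_mem_iff (H := H) (k := k) (i := x) hσ.toIsPermOn hs.le hx
    have mi := mem i (by omega)
    have mj := mem j (by omega)
    have mc := mem c (by omega)
    have ml := mem l (by omega)
    by_cases hc : s ≤ c ∧ c < s + k
    · by_cases hi : s ≤ i
      · have hj : s ≤ j ∧ j < s + k := by omega
        have hl' : s ≤ l ∧ l < s + k := by omega
        rw [topInsert_of_mem hi (by omega)] at h1 h3
        rw [topInsert_of_mem hj.1 hj.2] at h1 h2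
        rw [topInsert_of_mem hc.1 hc.2] at h3 h4
        rw [topInsert_of_mem hl'.1 hl'.2] at h2 h4
        exact hH.four (i - s) (j - s) (c - s) (l - s) (by omega) (by omega) (by omega) (by omega)
          ⟨by omega, by omega, by omega, by omega⟩
      · have hj : j < s := by omega
        rw [topInsert_of_lt (i := i) (by omega), topInsert_of_lt hj] at h1
        have := hs.mono i j hij hj
        omega
    · have hi : ¬ (s ≤ i ∧ i < s + k) := by omega
      have hj : ¬ (s ≤ j ∧ j < s + k) := by omega
      have hl' : ¬ (s ≤ l ∧ l < s + k) := by omega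
      rw [topInsert_of_not_mem hi] at h1 h3
      rw [topInsert_of_not_mem hj] at h1 h2
      rw [topInsert_of_not_mem hc] at h3 h4
      rw [topInsert_of_not_mem hl'] at h2 h4
      refine hσ.four _ _ _ _ ?_ ?_ ?_ ?_ ⟨h1, h2, h3, h4⟩ <;> grind
  six a b c d e f hab hbc hcd hde hef hf := by
    rintro ⟨h1, h2, h3, h4, h5⟩
    have hsm := hs.le
    have mem := fun x hx => topInsert_mem_iff (H := H) (k := k) (i := x) hσ.toIsPermOn hs.le hx
    have ma := mem a (by omega)
    have mb := mem b (by omega)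
    have mc := mem c (by omega)
    have md := mem d (by omega)
    have me := mem e (by omega)
    have mf := mem f (by omega)
    by_cases hf' : s ≤ f ∧ f < s + k
    · have hc : s ≤ c ∧ c < s + k := by omega
      have hd : s ≤ d ∧ d < s + k := by omega
      have he : s ≤ e ∧ e < s + k := by omega
      have ha : s ≤ a ∧ a < s + k := by omega
      have hb : s ≤ b ∧ b < s + k := by omega
      rw [topInsert_of_mem ha.1 ha.2] at h1 h2
      rw [topInsert_of_mem hb.1 hb.2] at h3 h4
      rw [topInsert_of_mem hc.1 hc.2] at h5
      rw [topInsert_of_mem hd.1 hd.2] at h1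
      rw [topInsert_of_mem he.1 he.2] at h2 h3
      rw [topInsert_of_mem hf'.1 hf'.2] at h4 h5
      exact hH.six (a - s) (b - s) (c - s) (d - s) (e - s) (f - s) (by omega) (by omega) (by omega)
        (by omega) (by omega) (by omega) ⟨by omega, by omega, by omega, by omega, by omega⟩
    · have ha : ¬ (s ≤ a ∧ a < s + k) := by omega
      have hb : ¬ (s ≤ b ∧ b < s + k) := by omega
      have hd : ¬ (s ≤ d ∧ d < s + k) := by omega
      have he : ¬ (s ≤ e ∧ e < s + k) := by omega
      rw [topInsert_of_not_mem ha] at h1 h2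
      rw [topInsert_of_not_mem hb] at h3 h4
      rw [topInsert_of_not_mem hd] at h1
      rw [topInsert_of_not_mem he] at h2 h3
      rw [topInsert_of_not_mem hf'] at h4 h5
      by_cases hc : s ≤ c ∧ c < s + k
      · refine hs.sep _ _ _ _ ?_ ?_ ?_ ?_ ?_ ⟨h1, h2, h3⟩ <;> grind
      · rw [topInsert_of_not_mem hc] at h5
        refine hσ.six _ _ _ _ _ _ ?_ ?_ ?_ ?_ ?_ ?_ ⟨h1, h2, h3, h4, h5⟩ <;> grind

theorem topInsert_last {s k m : ℕ} {H σ : ℕ → ℕ} (hs : s < m) :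
    topInsert s k m H σ (k + m - 1) = σ (m - 1) := by
  rw [topInsert_of_ge (by omega)]
  congr 1
  omega

theorem oneBeforeZero_topInsert {s k m : ℕ} {H σ : ℕ → ℕ} (h : OneBeforeZero m σ) :
    OneBeforeZero (k + m) (topInsert s k m H σ) := by
  obtain ⟨i, j, hij, hj, h1, h0⟩ := h
  refine ⟨if i < s then i else i + k, if j < s then j else j + k, ?_, ?_, ?_, ?_⟩ <;>
    grind [topInsert]

/-- The block of a top insertion can be recovered from the result, as the maximal run, starting at
position `s`, of entries exceeding the last one. -/
theorem topInsert_injective {s k m k' m' : ℕ} {H σ H' σ' : ℕ → ℕ} (hkm : k + m = k' + m')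
    (hH : IsPermOn k H) (hσ : IsPermOn m σ) (hH' : IsPermOn k' H') (hσ' : IsPermOn m' σ')
    (hs : s < m) (hs' : s < m') (h : ¬ σ (m - 1) < σ s) (h' : ¬ σ' (m' - 1) < σ' s)
    (heq : topInsert s k m H σ = topInsert s k' m' H' σ') : k = k' ∧ H = H' ∧ σ = σ' := by
  have hlast : σ (m - 1) = σ' (m' - 1) := by
    rw [← topInsert_last (k := k) (H := H) (σ := σ) hs,
      ← topInsert_last (k := k') (H := H') (σ := σ') hs', heq, hkm]
  have hk : k = k' := by
    rcases lt_trichotomy k k' with hlt | rfl | hlt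
    · exfalso
      have h1 := congrFun heq (s + k)
      rw [topInsert_of_ge le_rfl, topInsert_of_mem (by omega) (by omega), Nat.add_sub_cancel] at h1
      have := hσ'.lt (m' - 1) (by omega)
      omega
    · rfl
    · exfalso
      have h1 := congrFun heq (s + k')
      rw [topInsert_of_mem (by omega) (by omega), topInsert_of_ge le_rfl, Nat.add_sub_cancel] at h1
      have := hσ.lt (m - 1) (by omega)
      omega
  subst hk
  obtain rfl : m = m' := by omega
  refine ⟨rfl, ?_, ?_⟩
  · funext i
    by_cases hi : i < k
    · have h1 := congrFun heq (s + i)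
      rw [topInsert_of_mem (by omega) (by omega), topInsert_of_mem (by omega) (by omega),
        Nat.add_sub_cancel_left] at h1
      omega
    · rw [hH.eq_zero i (by omega), hH'.eq_zero i (by omega)]
  · funext i
    by_cases hi : i < s
    · have h1 := congrFun heq i
      rwa [topInsert_of_lt hi, topInsert_of_lt hi] at h1
    · have h1 := congrFun heq (i + k)
      rwa [topInsert_of_ge (by omega), topInsert_of_ge (by omega), Nat.add_sub_cancel] at h1

/-- If the first `s` entries do not exceed the last entry, then the maximal run of larger entries
starting at position `s` is a block of top values. -/
theorem IsGood.exists_topInsert {n s : ℕ} {p : ℕ → ℕ} (hp : IsGood n p) (hs : s < n)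
    (hlow : ∀ i, i < s → p i ≤ p (n - 1)) (hone : OneBeforeZero n p) (hlast : p (n - 1) ≠ 0) :
    ∃ k m H σ, k + m = n ∧ s < m ∧ IsGood k H ∧ IsGood m σ ∧ OneBeforeZero m σ ∧
      ¬ σ (m - 1) < σ s ∧ topInsert s k m H σ = p := by
  have hex : ∃ k, ¬ p (n - 1) < p (s + k) :=
    ⟨n - 1 - s, by rw [show s + (n - 1 - s) = n - 1 by omega]; exact lt_irrefl _⟩
  classical
  obtain ⟨k, hk, hmin⟩ : ∃ k, ¬ p (n - 1) < p (s + k) ∧ ∀ i, i < k → p (n - 1) < p (s + i) :=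
    ⟨Nat.find hex, Nat.find_spec hex, fun i hi => by simpa using Nat.find_min hex hi⟩
  have hkn : s + k < n := by
    by_contra hcon
    have := hmin (n - 1 - s) (by omega)
    rw [show s + (n - 1 - s) = n - 1 by omega] at this
    omega
  have htop := hp.toIsPermOn.top_values (I := Finset.Ico s (s + k))
    (fun i hi => by simp at hi ⊢; omega) (by
      intro i hi j hj hjI
      simp only [Finset.mem_Ico] at hi hjI
      have h1 := hmin (i - s) (by omega)
      rw [show s + (i - s) = i by omega] at h1
      by_cases hjs : j < s
      · have := hlow j hjs
        omega
      · by_contra hcon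
        have hij : p i ≠ p j := fun h => by
          have := hp.inj i j (by omega) hj h
          omega
        have hjk : s + k ≠ j := fun h => by subst h; omega
        have hkn' : p (s + k) ≠ p (n - 1) := fun h => by
          have := hp.inj _ _ hkn (by omega) h
          omega
        have hjn : j ≠ n - 1 := fun h => by subst h; omega
        exact hp.four i (s + k) j (n - 1) (by omega) (by omega) (by omega) (by omega)
          ⟨by omega, by omega, by omega, by omega⟩)
  simp only [Nat.card_Ico, Finset.mem_Ico, Nat.add_sub_cancel_left] at htop
  obtain ⟨htop, hbot⟩ := htop
  have hHp : IsPermOn k fun i => if i < k then p (s + i) - (n - k) else 0 := by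
    refine ⟨fun i hi => ?_, fun i j hi hj h => ?_, fun i hi => ?_⟩
    · have := hp.lt (s + i) (by omega)
      simp only [hi, if_true]
      omega
    · have h1 := htop (s + i) (by omega)
      have h2 := htop (s + j) (by omega)
      simp only [hi, hj, if_true] at h
      have := hp.inj (s + i) (s + j) (by omega) (by omega) (by omega)
      omega
    · simp only [show ¬ i < k by omega, if_false]
  have hσp : IsPermOn (n - k) fun i => p (if i < s then i else i + k) := by
    refine ⟨fun i hi => ?_, fun i j hi hj h => ?_, fun i hi => ?_⟩
    · exact hbot _ (by split_ifs <;> omega) (by split_ifs <;> omega)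
    · have := hp.inj _ _ (by split_ifs <;> omega) (by split_ifs <;> omega) h
      split_ifs at this <;> omega
    · exact hp.eq_zero _ (by split_ifs <;> omega)
  refine ⟨k, n - k, fun i => if i < k then p (s + i) - (n - k) else 0,
    fun i => p (if i < s then i else i + k), by omega, by omega, ?_, ?_, ?_, ?_, ?_⟩
  · refine hp.of_embedding hHp (fun i => s + i) (fun i j hij _ => by omega)
      (fun i hi => by omega) (fun i j hi hj h => ?_)
    simp only [hi, hj, if_true] at h
    omega
  · exact hp.of_embedding hσp (fun i => if i < s then i else i + k)
      (fun i j hij _ => by split_ifs <;> omega)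
      (fun i hi => by split_ifs <;> omega) (fun i j hi hj h => h)
  · obtain ⟨i, j, hij, hj, h1, h0⟩ := hone
    have hi' := htop i
    have hj' := htop j
    have hln : p (n - 1) < n - k := hbot _ (by omega) (by omega)
    have : ¬ (s ≤ i ∧ i < s + k) := by omega
    have : ¬ (s ≤ j ∧ j < s + k) := by omega
    refine ⟨if i < s then i else i - k, if j < s then j else j - k, ?_, ?_, ?_, ?_⟩
    · split_ifs <;> omega
    · split_ifs <;> omega
    · rw [← h1]
      dsimp only
      congr 1
      split_ifs <;> omega
    · rw [← h0]
      dsimp only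
      congr 1
      split_ifs <;> omega
  · have : ¬ n - k - 1 < s := by omega
    simp only [this, if_false, lt_irrefl]
    rwa [show n - k - 1 + k = n - 1 by omega]
  · funext i
    rcases lt_or_ge i s with hi | hi
    · rw [topInsert_of_lt hi]
      simp only [hi, if_true]
    · rcases lt_or_ge i (s + k) with hi' | hi'
      · have := htop i ⟨hi, hi'⟩
        rw [topInsert_of_mem hi hi']
        simp only [show i - s < k by omega, if_true]
        rw [show s + (i - s) = i by omega]
        omega
      · rw [topInsert_of_ge hi']
        simp only [show ¬ i - k < s by omega, if_false]
        congr 1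
        omega

/-- Good permutations of length `n` with a separated increasing prefix of length `r`. -/
def goodSet (r n : ℕ) : Set (ℕ → ℕ) :=
  {p | IsGood n p ∧ HasPrefix r n p}

/-- The members of `goodSet r n` with `1` to the left of `0`. -/
def oneZeroSet (r n : ℕ) : Set (ℕ → ℕ) :=
  {p | IsGood n p ∧ HasPrefix r n p ∧ OneBeforeZero n p}

/-- The members of `oneZeroSet r n` whose last entry is nonzero and exceeds the first one. -/
def riseSet (r n : ℕ) : Set (ℕ → ℕ) :=
  {p | p ∈ oneZeroSet r n ∧ p (n - 1) ≠ 0 ∧ p 0 < p (n - 1)}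

/-- The members of `riseSet r n` whose entry right after the prefix does not exceed the last
one. -/
def lowRiseSet (r n : ℕ) : Set (ℕ → ℕ) :=
  {p | p ∈ riseSet r n ∧ ¬ p (n - 1) < p r}

theorem goodSet_finite (r n : ℕ) : (goodSet r n).Finite :=
  (IsPermOn.finite n).subset fun _ hp => hp.1.toIsPermOn

theorem oneZeroSet_finite (r n : ℕ) : (oneZeroSet r n).Finite :=
  (IsPermOn.finite n).subset fun _ hp => hp.1.toIsPermOn

theorem riseSet_finite (r n : ℕ) : (riseSet r n).Finite :=
  (oneZeroSet_finite r n).subset fun _ hp => hp.1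

theorem lowRiseSet_finite (r n : ℕ) : (lowRiseSet r n).Finite :=
  (riseSet_finite r n).subset fun _ hp => hp.1

theorem hasPrefix_zero (n : ℕ) (p : ℕ → ℕ) : HasPrefix 0 n p :=
  ⟨Nat.zero_le n, fun _ _ _ h => absurd h (by omega), fun _ _ _ _ h => absurd h (by omega)⟩

theorem hasPrefix_one {n : ℕ} (hn : 1 ≤ n) (p : ℕ → ℕ) : HasPrefix 1 n p := by
  refine ⟨hn, fun _ _ _ h => by omega, fun a b c d ha hb _ _ _ h => ?_⟩
  obtain rfl : a = b := by omega
  omega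

theorem OneBeforeZero.two_le {n : ℕ} {p : ℕ → ℕ} (h : OneBeforeZero n p) : 2 ≤ n := by
  obtain ⟨i, j, hij, hj, -⟩ := h
  omega

theorem exists_zero_of_mem_oneZeroSet {r n : ℕ} {p : ℕ → ℕ} (hp : p ∈ oneZeroSet r n) :
    ∃ j, r ≤ j ∧ 0 < j ∧ j < n ∧ p j = 0 := by
  obtain ⟨-, hpre, i, j, hij, hj, h1, h0⟩ := hp
  refine ⟨j, ?_, by omega, hj, h0⟩
  by_contra hcon
  have := hpre.mono i j hij (by omega)
  omega

theorem succ_lt_of_mem_riseSet {r n : ℕ} {p : ℕ → ℕ} (hp : p ∈ riseSet r n) : r < n - 1 := by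
  obtain ⟨j, hrj, -, hj, h0⟩ := exists_zero_of_mem_oneZeroSet hp.1
  have : j ≠ n - 1 := fun h => hp.2.1 (h ▸ h0)
  omega

theorem prefix_lt_last {r n : ℕ} {p : ℕ → ℕ} (hp : p ∈ riseSet (r + 1) n) {i : ℕ}
    (hi : i < r + 1) : p i < p (n - 1) := by
  have hr := succ_lt_of_mem_riseSet hp
  obtain ⟨⟨hgood, hpre, hone⟩, hl, h0l⟩ := hp
  obtain ⟨j, hrj, -, hj, h0⟩ := exists_zero_of_mem_oneZeroSet ⟨hgood, hpre, hone⟩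
  have hjn : j ≠ n - 1 := fun h => hl (h ▸ h0)
  by_contra hcon
  have hin : p i ≠ p (n - 1) := fun h => by
    have := hgood.inj i (n - 1) (by omega) (by omega) h
    omega
  have h0j : p 0 ≠ p j := fun h => by
    have := hgood.inj 0 j (by omega) (by omega) h
    omega
  exact hpre.sep 0 i j (n - 1) (by omega) hi hrj (by omega) (by omega)
    ⟨by omega, by omega, by omega⟩

theorem ncard_riseSet (r n : ℕ) :
    (riseSet (r + 1) n).ncard = ∑ x ∈ Finset.HasAntidiagonal.antidiagonal n,
      (goodSet 0 x.1).ncard * (lowRiseSet (r + 1) x.2).ncard := by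
  refine ncard_eq_sum_of_decomposition n (goodSet_finite 0) (lowRiseSet_finite (r + 1))
    (riseSet_finite _ _) (fun k m H σ => topInsert (r + 1) k m H σ) ?_ ?_ ?_
  · rintro k m H σ rfl ⟨hH, -⟩ ⟨hrise, -⟩
    have hr := succ_lt_of_mem_riseSet hrise
    obtain ⟨⟨hσ, hpre, hone⟩, hl, h0⟩ := hrise
    refine ⟨⟨isGood_topInsert hH hσ hpre, ⟨by omega, ?_, ?_⟩, oneBeforeZero_topInsert hone⟩, ?_, ?_⟩
    · intro i j hij hj
      rw [topInsert_of_lt (i := i) (by omega), topInsert_of_lt hj]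
      exact hpre.mono i j hij hj
    · rintro a b c d ha hb hc hcd hd ⟨h1, h2, h3⟩
      have mc := topInsert_mem_iff (H := H) (k := k) (i := c) hσ.toIsPermOn hpre.le (by omega)
      have md := topInsert_mem_iff (H := H) (k := k) (i := d) hσ.toIsPermOn hpre.le (by omega)
      rw [topInsert_of_lt ha] at h1 h2
      rw [topInsert_of_lt hb] at h3
      have := hσ.lt a (by omega)
      have := hσ.lt b (by omega)
      have hc' : r + 1 + k ≤ c := by omega
      rw [topInsert_of_ge hc'] at h1
      rw [topInsert_of_ge (i := d) (by omega)] at h2 h3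
      exact hpre.sep a b (c - k) (d - k) ha hb (by omega) (by omega) (by omega) ⟨h1, h2, h3⟩
    · rwa [topInsert_last (by omega)]
    · rwa [topInsert_last (by omega), topInsert_of_lt (by omega)]
  · rintro k m H σ k' m' H' σ' hkm ⟨hH, -⟩ ⟨hσ, hlow⟩ hkm' ⟨hH', -⟩ ⟨hσ', hlow'⟩ heq
    have hr := succ_lt_of_mem_riseSet hσ
    have hr' := succ_lt_of_mem_riseSet hσ'
    exact topInsert_injective (by omega) hH.toIsPermOn hσ.1.1.toIsPermOn hH'.toIsPermOn
      hσ'.1.1.toIsPermOn (by omega) (by omega) hlow hlow' heq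
  · intro p hp
    have hr := succ_lt_of_mem_riseSet hp
    have hpl := fun i => prefix_lt_last (i := i) hp
    obtain ⟨⟨hgood, hpre, hone⟩, hl, h0⟩ := hp
    obtain ⟨k, m, H, σ, hkm, hs, hH, hσ, hone', hlow, rfl⟩ :=
      hgood.exists_topInsert (s := r + 1) (by omega) (fun i hi => (hpl i hi).le) hone hl
    subst hkm
    rw [topInsert_last hs] at hl h0
    rw [topInsert_of_lt (by omega)] at h0
    refine ⟨k, m, H, σ, rfl, ⟨hH, hasPrefix_zero _ _⟩,
      ⟨⟨⟨hσ, ⟨by omega, ?_, ?_⟩, hone'⟩, hl, h0⟩, hlow⟩, rfl⟩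
    · intro i j hij hj
      have := hpre.mono i j hij hj
      rwa [topInsert_of_lt (i := i) (by omega), topInsert_of_lt hj] at this
    · intro a b c d ha hb hc hcd hd h
      have := hpre.sep a b (c + k) (d + k) ha hb (by omega) (by omega) (by omega)
      rw [topInsert_of_lt ha, topInsert_of_lt hb, topInsert_of_ge (i := c + k) (by omega),
        topInsert_of_ge (i := d + k) (by omega), Nat.add_sub_cancel, Nat.add_sub_cancel] at this
      exact this h

theorem ncard_oneZeroSet_fall (r n : ℕ) :
    {p | p ∈ oneZeroSet (r + 1) n ∧ p (n - 1) ≠ 0 ∧ ¬ p 0 < p (n - 1)}.ncard =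
      ∑ x ∈ Finset.HasAntidiagonal.antidiagonal n,
        (goodSet (r + 1) x.1).ncard * (riseSet 1 x.2).ncard := by
  refine ncard_eq_sum_of_decomposition n (goodSet_finite (r + 1)) (riseSet_finite 1)
    ((oneZeroSet_finite (r + 1) n).subset fun _ h => h.1)
    (fun k m H σ => topInsert 0 k m H σ) ?_ ?_ ?_
  · rintro k m H σ rfl ⟨hH, hpre⟩ hrise
    have hr := succ_lt_of_mem_riseSet hrise
    obtain ⟨⟨hσ, -, hone⟩, hl, h0⟩ := hrise
    have hle := hpre.le
    refine ⟨⟨isGood_topInsert hH hσ (hasPrefix_zero _ _), ⟨by omega, ?_, ?_⟩,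
      oneBeforeZero_topInsert hone⟩, ?_, ?_⟩
    · intro i j hij hj
      have := hpre.mono i j hij hj
      rw [topInsert_of_mem (i := i) (by omega) (by omega), topInsert_of_mem (by omega) (by omega)]
      simpa using this
    · rintro a b c d ha hb hc hcd hd ⟨h1, h2, h3⟩
      have md := topInsert_mem_iff (s := 0) (H := H) (k := k) (i := d) hσ.toIsPermOn (by omega)
        (by omega)
      rw [topInsert_of_mem (i := a) (by omega) (by omega)] at h1 h2
      rw [topInsert_of_mem (i := b) (by omega) (by omega)] at h3
      have hdk : d < 0 + k := by omega
      rw [topInsert_of_mem (i := c) (by omega) (by omega)] at h1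
      rw [topInsert_of_mem (by omega) hdk] at h2 h3
      exact hpre.sep a b c d ha hb hc hcd (by omega)
        ⟨by simpa using h1, by simpa using h2, by simpa using h3⟩
    · rwa [topInsert_last (by omega)]
    · have := hσ.lt (m - 1) (by omega)
      rw [topInsert_last (by omega), topInsert_of_mem (by omega) (by omega)]
      omega
  · rintro k m H σ k' m' H' σ' hkm ⟨hH, -⟩ hσ hkm' ⟨hH', -⟩ hσ' heq
    have hr := succ_lt_of_mem_riseSet hσ
    have hr' := succ_lt_of_mem_riseSet hσ'
    exact topInsert_injective (by omega) hH.toIsPermOn hσ.1.1.toIsPermOn hH'.toIsPermOn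
      hσ'.1.1.toIsPermOn (by omega) (by omega) hσ.2.2.le.not_gt hσ'.2.2.le.not_gt heq
  · rintro p ⟨⟨hgood, hpre, hone⟩, hl, h0⟩
    have hn := hone.two_le
    obtain ⟨k, m, H, σ, hkm, hs, hH, hσ, hone', hlow, rfl⟩ :=
      hgood.exists_topInsert (s := 0) (by omega) (fun i hi => absurd hi (by omega)) hone hl
    subst hkm
    have hm := hone'.two_le
    have hne : σ 0 ≠ σ (m - 1) := fun h => by
      have := hσ.inj 0 (m - 1) (by omega) (by omega) h
      omega
    rw [topInsert_last hs] at hl h0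
    have hk : 0 < k := by
      by_contra hcon
      rw [topInsert_of_ge (by omega)] at h0
      rw [Nat.zero_sub] at h0
      exact h0 (lt_of_le_of_ne (not_lt.mp hlow) hne)
    have hrk : r + 1 ≤ k := by
      by_contra hcon
      have := hpre.mono 0 k hk (by omega)
      rw [topInsert_of_mem (by omega) (by omega), topInsert_of_ge (by omega)] at this
      have := hσ.lt (k - k) (by omega)
      omega
    refine ⟨k, m, H, σ, rfl, ⟨hH, ⟨hrk, ?_, ?_⟩⟩,
      ⟨⟨hσ, hasPrefix_one (by omega) _, hone'⟩, hl, lt_of_le_of_ne (not_lt.mp hlow) hne⟩, rfl⟩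
    · intro i j hij hj
      have := hpre.mono i j hij hj
      rw [topInsert_of_mem (i := i) (by omega) (by omega),
        topInsert_of_mem (by omega) (by omega)] at this
      simpa using this
    · intro a b c d ha hb hc hcd hd h
      have := hpre.sep a b c d ha hb (by omega) (by omega) (by omega)
      rw [topInsert_of_mem (i := a) (by omega) (by omega),
        topInsert_of_mem (i := b) (by omega) (by omega),
        topInsert_of_mem (i := c) (by omega) (by omega),
        topInsert_of_mem (i := d) (by omega) (by omega)] at this
      exact this (by simpa using h)

theorem ncard_oneZeroSet_last_zero (r n : ℕ) :
    {p | p ∈ oneZeroSet (r + 1) (n + 1) ∧ p n = 0}.ncard = (goodSet (r + 1) n).ncard := by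
  symm
  refine Set.ncard_congr (fun q _ i => if i < n then q i + 1 else 0) ?_ ?_ ?_
  · rintro q ⟨hq, hpre⟩
    have hle := hpre.le
    refine ⟨⟨⟨⟨?_, ?_, ?_⟩, ?_, ?_⟩, ⟨by omega, ?_, ?_⟩, ?_⟩, ?_⟩
    · intro i hi
      have := hq.lt i
      grind
    · intro i j hi hj
      have := hq.inj i j
      grind
    · intro i hi
      grind
    · intro i j k l hij hjk hkl hl
      have := hq.four i j k l hij hjk hkl
      grind
    · intro a b c d e f hab hbc hcd hde hef hf
      have := hq.six a b c d e f hab hbc hcd hde hef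
      grind
    · intro i j hij hj
      have := hpre.mono i j hij hj
      grind
    · intro a b c d ha hb hc hcd hd
      have := hpre.sep a b c d ha hb hc hcd
      grind
    · obtain ⟨i, hi, h0⟩ := hq.surj (v := 0) (by omega)
      exact ⟨i, n, hi, by omega, by simp [hi, h0], by simp⟩
    · simp
  · intro p q hp hq h
    funext i
    have h1 := congrFun h i
    have h2 := hp.1.eq_zero i
    have h3 := hq.1.eq_zero i
    grind
  · rintro p ⟨⟨hp, hpre, hone⟩, h0⟩
    have hn := hone.two_le
    have hpos : ∀ i, i < n → 0 < p i := fun i hi => by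
      by_contra hcon
      have := hp.inj i n (by omega) (by omega) (by omega)
      omega
    have hle : r + 1 ≤ n := by
      by_contra hcon
      have := hpre.mono 0 n (by omega) (by omega)
      omega
    refine ⟨fun i => p i - 1, ⟨hp.of_embedding ⟨?_, ?_, ?_⟩ (fun i => i) (fun _ _ h _ => h)
      (fun i hi => by omega) (fun i j _ _ h => by omega), ⟨hle, ?_, ?_⟩⟩, ?_⟩
    · intro i hi
      have := hp.lt i (by omega)
      omega
    · intro i j hi hj h
      have := hpos i hi
      have := hpos j hj
      exact hp.inj i j (by omega) (by omega) (by omega)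
    · intro i hi
      rcases eq_or_lt_of_le hi with rfl | hi
      · simp [h0]
      · simp [hp.eq_zero i hi]
    · intro i j hij hj
      have := hpre.mono i j hij hj
      have := hpos i (by omega)
      omega
    · intro a b c d ha hb hc hcd hd
      have := hpre.sep a b c d ha hb hc hcd
      omega
    · funext i
      have := hpos i
      have := hp.eq_zero i
      grind

theorem ncard_oneZeroSet (r n : ℕ) :
    (oneZeroSet (r + 1) (n + 1)).ncard = (goodSet (r + 1) n).ncard +
      ∑ x ∈ Finset.HasAntidiagonal.antidiagonal (n + 1),
        (goodSet (r + 1) x.1).ncard * (riseSet 1 x.2).ncard + (riseSet (r + 1) (n + 1)).ncard := by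
  rw [← ncard_oneZeroSet_last_zero, ← ncard_oneZeroSet_fall]
  have hfin := oneZeroSet_finite (r + 1) (n + 1)
  rw [← Set.ncard_union_eq ?_ (hfin.subset fun _ h => h.1) (hfin.subset fun _ h => h.1),
    ← Set.ncard_union_eq ?_ (hfin.subset ?_) (riseSet_finite _ _)]
  · congr 1
    ext p
    simp only [riseSet, Set.mem_union, Set.mem_ofPred_eq, Nat.add_sub_cancel]
    tauto
  · rw [Set.disjoint_left]
    rintro p (h | h) h'
    · exact h'.2.1 h.2
    · exact h.2.2 h'.2.2
  · rintro p (h | h)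
    · exact h.1
    · exact h.1
  · rw [Set.disjoint_left]
    rintro p h h'
    exact h'.2.1 h.2

theorem ncard_riseSet_last_max (r n : ℕ) :
    {p | p ∈ riseSet (r + 1) (n + 1) ∧ p n = n}.ncard = (oneZeroSet (r + 1) n).ncard := by
  symm
  refine Set.ncard_congr (fun q _ i => if i < n then q i else if i = n then n else 0) ?_ ?_ ?_
  · rintro q ⟨hq, hpre, hone⟩
    have hn := hone.two_le
    have hle := hpre.le
    refine ⟨⟨⟨⟨⟨?_, ?_, ?_⟩, ?_, ?_⟩, ⟨by omega, ?_, ?_⟩, ?_⟩, ?_, ?_⟩, ?_⟩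
    · intro i hi
      have := hq.lt i
      grind
    · intro i j hi hj
      have := hq.inj i j
      have := hq.lt i
      have := hq.lt j
      grind
    · intro i hi
      grind
    · intro i j k l hij hjk hkl hl
      have := hq.four i j k l hij hjk hkl
      have := hq.lt k
      grind
    · intro a b c d e f hab hbc hcd hde hef hf
      have := hq.six a b c d e f hab hbc hcd hde hef
      have := hq.lt c
      grind
    · intro i j hij hj
      have := hpre.mono i j hij hj
      grind
    · intro a b c d ha hb hc hcd hd
      have := hpre.sep a b c d ha hb hc hcd
      have := hq.lt b
      grind
    · obtain ⟨i, j, hij, hj, h1, h0⟩ := hone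
      exact ⟨i, j, hij, by omega, by simp [hij.trans hj, h1], by simp [hj, h0]⟩
    · simp
      omega
    · have := hq.lt 0 (by omega)
      simp only [Nat.add_sub_cancel]
      grind
    · simp
  · intro p q hp hq h
    funext i
    have h1 := congrFun h i
    have h2 := hp.1.eq_zero i
    have h3 := hq.1.eq_zero i
    grind
  · rintro p ⟨hrise, hmax⟩
    have hr := succ_lt_of_mem_riseSet hrise
    obtain ⟨⟨hp, hpre, hone⟩, hl, h0⟩ := hrise
    have hn := hone.two_le
    have hlt : ∀ i, i < n → p i < n := fun i hi => by
      have := hp.lt i (by omega)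
      have : p i ≠ p n := fun h => by
        have := hp.inj i n (by omega) (by omega) h
        omega
      omega
    refine ⟨fun i => if i < n then p i else 0, ⟨hp.of_embedding ⟨?_, ?_, ?_⟩ (fun i => i)
      (fun _ _ h _ => h) (fun i hi => by omega) ?_, ⟨by omega, ?_, ?_⟩, ?_⟩, ?_⟩
    · intro i hi
      simpa [hi] using hlt i hi
    · intro i j hi hj h
      have := hp.inj i j
      grind
    · intro i hi
      grind
    · intro i j hi hj h
      grind
    · intro i j hij hj
      have := hpre.mono i j hij hj
      grind
    · intro a b c d ha hb hc hcd hd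
      have := hpre.sep a b c d ha hb hc hcd
      grind
    · obtain ⟨i, j, hij, hj, h1, h0'⟩ := hone
      have : j ≠ n := fun h => hl (h ▸ h0')
      exact ⟨i, j, hij, by omega, by grind, by grind⟩
    · funext i
      have := hp.eq_zero i
      grind

theorem lowRiseSet_last_ne_max (r n : ℕ) :
    {p | p ∈ lowRiseSet (r + 1) (n + 1) ∧ p n ≠ n} =
      {p | p ∈ riseSet (r + 2) (n + 1) ∧ p n ≠ n} := by
  ext p
  constructor
  · rintro ⟨⟨hrise, hlow⟩, hn⟩
    have hr := succ_lt_of_mem_riseSet hrise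
    have hpl := fun i => prefix_lt_last (i := i) hrise
    obtain ⟨⟨hp, hpre, hone⟩, hl, h0⟩ := hrise
    simp only [Nat.add_sub_cancel] at hl h0 hlow hpl hr
    have hlow' : ∀ i, i < r + 2 → p i < p n := by
      intro i hi
      rcases Nat.lt_succ_iff_lt_or_eq.mp hi with hi | rfl
      · exact hpl i hi
      · have : p (r + 1) ≠ p n := fun h => by
          have := hp.inj _ _ (by omega) (by omega) h
          omega
        omega
    obtain ⟨h, hhn, hh⟩ := hp.surj (v := n) (by omega)
    have hpn := hp.lt n (by omega)
    have hhr : r + 2 ≤ h := by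
      by_contra hcon
      have := hlow' h (by omega)
      omega
    have hhn' : h ≠ n := fun e => hn (e ▸ hh)
    have hmono : ∀ i j, i < j → j < r + 2 → p i < p j := by
      intro i j hij hj
      have hi := hlow' i (by omega)
      have hj' := hlow' j hj
      have hne : p i ≠ p j := fun e => by
        have := hp.inj i j (by omega) (by omega) e
        omega
      have := hp.four i j h n hij (by omega) (by omega) (by omega)
      omega
    refine ⟨⟨⟨hp, ⟨by omega, hmono, ?_⟩, hone⟩, hl, h0⟩, hn⟩
    rintro a b c d ha hb hc hcd hd ⟨h1, h2, h3⟩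
    have ha' := hlow' a ha
    have hb' := hlow' b hb
    have hdn : d ≠ n := fun e => by subst e; omega
    have hab : a < b := by
      rcases lt_trichotomy a b with hab | rfl | hab
      · exact hab
      · omega
      · have := hmono b a hab ha
        omega
    have hch : c ≠ h := fun e => by subst e; omega
    rcases lt_or_gt_of_ne hch with hch | hch
    · exact hp.four a c h n (by omega) hch (by omega) (by omega)
        ⟨by omega, by omega, by omega, by omega⟩
    · exact hp.six a b h c d n hab (by omega) hch hcd (by omega) (by omega)
        ⟨h1, h2, h3, hb', by omega⟩
  · rintro ⟨hrise, hn⟩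
    have hr := succ_lt_of_mem_riseSet hrise
    have hlow := prefix_lt_last (i := r + 1) hrise (by omega)
    obtain ⟨⟨hp, hpre, hone⟩, hl, h0⟩ := hrise
    refine ⟨⟨⟨⟨hp, ⟨by omega, fun i j hij hj => hpre.mono i j hij (by omega), ?_⟩, hone⟩, hl, h0⟩,
      hlow.le.not_gt⟩, hn⟩
    rintro a b c d ha hb hc hcd hd h
    by_cases hcr : c = r + 1
    · have := hpre.mono a c (by omega) (by omega)
      omega
    · exact hpre.sep a b c d (by omega) (by omega) (by omega) hcd hd h

theorem lowRiseSet_last_max (r n : ℕ) :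
    {p | p ∈ lowRiseSet r (n + 1) ∧ p n = n} = {p | p ∈ riseSet r (n + 1) ∧ p n = n} := by
  ext p
  refine ⟨fun h => ⟨h.1.1, h.2⟩, fun h => ⟨⟨h.1, ?_⟩, h.2⟩⟩
  have hr := succ_lt_of_mem_riseSet h.1
  have := h.1.1.1.lt r (by omega)
  have hn := h.2
  rw [Nat.add_sub_cancel, hn]
  omega

theorem ncard_split_last (S : Set (ℕ → ℕ)) (hS : S.Finite) (n : ℕ) :
    S.ncard = {p | p ∈ S ∧ p n = n}.ncard + {p | p ∈ S ∧ p n ≠ n}.ncard := by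
  rw [← Set.ncard_union_eq ?_ (hS.subset fun _ h => h.1) (hS.subset fun _ h => h.1)]
  · congr 1
    ext p
    simp only [Set.mem_union, Set.mem_ofPred_eq]
    tauto
  · rw [Set.disjoint_left]
    exact fun p h h' => h'.2 h.2

theorem ncard_lowRiseSet (r n : ℕ) :
    (lowRiseSet (r + 1) (n + 1)).ncard + (oneZeroSet (r + 2) n).ncard =
      (riseSet (r + 2) (n + 1)).ncard + (oneZeroSet (r + 1) n).ncard := by
  rw [ncard_split_last _ (lowRiseSet_finite (r + 1) (n + 1)) n,
    ncard_split_last _ (riseSet_finite (r + 2) (n + 1)) n, lowRiseSet_last_max,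
    lowRiseSet_last_ne_max, ncard_riseSet_last_max, ncard_riseSet_last_max]
  ring

theorem ncard_goodSet_first_zero (r n : ℕ) :
    {p | p ∈ goodSet (r + 1) (n + 1) ∧ p 0 = 0}.ncard = (goodSet r n).ncard := by
  symm
  refine Set.ncard_congr (fun q _ i => if i = 0 then 0 else if i ≤ n then q (i - 1) + 1 else 0)
    ?_ ?_ ?_
  · rintro q ⟨hq, hpre⟩
    have hle := hpre.le
    refine ⟨⟨⟨⟨?_, ?_, ?_⟩, ?_, ?_⟩, ⟨by omega, ?_, ?_⟩⟩, ?_⟩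
    · intro i hi
      have := hq.lt (i - 1)
      grind
    · intro i j hi hj
      have := hq.inj (i - 1) (j - 1)
      grind
    · intro i hi
      grind
    · intro i j k l hij hjk hkl hl
      have := hq.four (i - 1) (j - 1) (k - 1) (l - 1)
      grind
    · intro a b c d e f hab hbc hcd hde hef hf
      have := hq.six (a - 1) (b - 1) (c - 1) (d - 1) (e - 1) (f - 1)
      grind
    · intro i j hij hj
      have := hpre.mono (i - 1) (j - 1)
      grind
    · intro a b c d ha hb hc hcd hd
      have := hpre.sep (a - 1) (b - 1) (c - 1) (d - 1)
      grind
    · simp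
  · intro p q hp hq h
    funext i
    have h1 := congrFun h (i + 1)
    have h2 := hp.1.eq_zero i
    have h3 := hq.1.eq_zero i
    grind
  · rintro p ⟨⟨hp, hpre⟩, h0⟩
    have hle := hpre.le
    have hpos : ∀ i, i < n → 0 < p (i + 1) := fun i hi => by
      by_contra hcon
      have := hp.inj (i + 1) 0 (by omega) (by omega) (by omega)
      omega
    refine ⟨fun i => p (i + 1) - 1, ⟨hp.of_embedding ⟨?_, ?_, ?_⟩ (fun i => i + 1)
      (fun _ _ h _ => by omega) (fun i hi => by omega) (fun i j _ _ h => by omega),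
      ⟨by omega, ?_, ?_⟩⟩, ?_⟩
    · intro i hi
      have := hp.lt (i + 1) (by omega)
      omega
    · intro i j hi hj h
      have := hpos i hi
      have := hpos j hj
      have := hp.inj (i + 1) (j + 1) (by omega) (by omega) (by omega)
      omega
    · intro i hi
      simp [hp.eq_zero (i + 1) (by omega)]
    · intro i j hij hj
      have := hpre.mono (i + 1) (j + 1) (by omega) (by omega)
      have := hpos i (by omega)
      omega
    · intro a b c d ha hb hc hcd hd
      have := hpre.sep (a + 1) (b + 1) (c + 1) (d + 1) (by omega) (by omega) (by omega) (by omega)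
      omega
    · funext i
      rcases i with _ | i
      · simp [h0]
      · have := hpos i
        have := hp.eq_zero (i + 1)
        simp only [Nat.add_sub_cancel]
        grind

/-- The position of the value `0`. -/
noncomputable def zeroPos (p : ℕ → ℕ) : ℕ :=
  sInf {i | p i = 0}

theorem IsPermOn.zeroPos_eq {n : ℕ} {p : ℕ → ℕ} (hp : IsPermOn n p) {j : ℕ} (hj : j < n)
    (h : p j = 0) : zeroPos p = j := by
  have h1 : zeroPos p ≤ j := Nat.sInf_le h
  have h2 : p (zeroPos p) = 0 := Nat.sInf_mem (s := {i | p i = 0}) ⟨j, h⟩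
  exact hp.inj _ _ (by omega) hj (h2.trans h.symm)

/-- Replace the value `0`, at position `a`, of the permutation `τ` of length `m` by a block of the
`k + 1` smallest values: a `0` followed by a copy of the permutation `B` of length `k`. -/
def botInsert (a k m : ℕ) (B τ : ℕ → ℕ) (i : ℕ) : ℕ :=
  if i < a then τ i + k else if i = a then 0 else if i ≤ a + k then B (i - a - 1) + 1
    else if i < k + m then τ (i - k) + k else 0

section botInsert

variable {a k m : ℕ} {B τ : ℕ → ℕ} {i : ℕ}

theorem botInsert_of_lt (h : i < a) : botInsert a k m B τ i = τ i + k := by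
  grind [botInsert]

theorem botInsert_self : botInsert a k m B τ a = 0 := by
  grind [botInsert]

theorem botInsert_of_mem (h : a < i) (h' : i ≤ a + k) :
    botInsert a k m B τ i = B (i - a - 1) + 1 := by
  grind [botInsert]

theorem botInsert_of_gt (h : a + k < i) (hi : i < k + m) :
    botInsert a k m B τ i = τ (i - k) + k := by
  grind [botInsert]

theorem botInsert_of_not_mem (h : ¬ (a ≤ i ∧ i ≤ a + k)) (hi : i < k + m) :
    botInsert a k m B τ i = τ (if i < a then i else i - k) + k := by
  grind [botInsert]

theorem IsPermOn.pos_of_ne (hτ : IsPermOn m τ) (ha : a < m) (h0 : τ a = 0) (hi : i < m)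
    (hne : i ≠ a) : 0 < τ i := by
  by_contra hcon
  exact hne (hτ.inj i a hi ha (by omega))

theorem botInsert_mem_iff (hB : IsPermOn k B) (hτ : IsPermOn m τ) (ha : a < m) (h0 : τ a = 0)
    (hi : i < k + m) : botInsert a k m B τ i ≤ k ↔ a ≤ i ∧ i ≤ a + k := by
  constructor
  · intro h
    by_contra hcon
    rw [botInsert_of_not_mem hcon hi] at h
    have := hτ.pos_of_ne ha h0 (i := if i < a then i else i - k) (by split_ifs <;> omega)
      (by split_ifs <;> omega)
    omega
  · rintro ⟨h1, h2⟩
    rcases eq_or_lt_of_le h1 with rfl | h1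
    · rw [botInsert_self]
      omega
    · rw [botInsert_of_mem h1 h2]
      exact hB.lt _ (by omega)

theorem isPermOn_botInsert (hB : IsPermOn k B) (hτ : IsPermOn m τ) (ha : a < m) (h0 : τ a = 0) :
    IsPermOn (k + m) (botInsert a k m B τ) where
  lt i hi := by
    have h1 := hτ.lt i
    have h2 := hτ.lt (i - k)
    have h3 := hB.lt (i - a - 1)
    grind [botInsert]
  inj i j hi hj h := by
    have h1 := botInsert_mem_iff hB hτ ha h0 hi
    have h2 := botInsert_mem_iff hB hτ ha h0 hj
    by_cases hi' : a ≤ i ∧ i ≤ a + k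
    · have hj' : a ≤ j ∧ j ≤ a + k := by rw [← h2, ← h, h1]; exact hi'
      have := hB.inj (i - a - 1) (j - a - 1)
      grind [botInsert]
    · have hj' : ¬ (a ≤ j ∧ j ≤ a + k) := by rw [← h2, ← h, h1]; exact hi'
      rw [botInsert_of_not_mem hi' hi, botInsert_of_not_mem hj' hj] at h
      have := hτ.inj (if i < a then i else i - k) (if j < a then j else j - k)
        (by split_ifs <;> omega) (by split_ifs <;> omega) (by omega)
      split_ifs at this <;> omega
  eq_zero i hi := by
    grind [botInsert]

theorem OneBeforeZero.zeroPos_spec (hτ : IsPermOn m τ) (h : OneBeforeZero m τ) :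
    zeroPos τ < m ∧ τ (zeroPos τ) = 0 ∧ ∃ i, i < zeroPos τ ∧ τ i = 1 := by
  obtain ⟨i, j, hij, hj, h1, h0⟩ := h
  rw [hτ.zeroPos_eq hj h0]
  exact ⟨hj, h0, i, hij, h1⟩

theorem IsGood.mono_of_oneBeforeZero (hτ : IsGood m τ) (hone : OneBeforeZero m τ) {c l : ℕ}
    (hc : zeroPos τ < c) (hcl : c < l) (hl : l < m) : τ c < τ l := by
  obtain ⟨ha, h0, i, hi, h1⟩ := hone.zeroPos_spec hτ.toIsPermOn
  have hl0 := hτ.toIsPermOn.pos_of_ne ha h0 hl (by omega)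
  have hc0 := hτ.toIsPermOn.pos_of_ne ha h0 (i := c) (by omega) (by omega)
  have hc1 : τ c ≠ τ i := fun h => by
    have := hτ.inj c i (by omega) (by omega) h
    omega
  have hcl' : τ c ≠ τ l := fun h => by
    have := hτ.inj c l (by omega) (by omega) h
    omega
  have := hτ.four i (zeroPos τ) c l hi hc hcl hl
  omega

theorem isGood_botInsert (hB : IsGood k B) (hτ : IsGood m τ) (hone : OneBeforeZero m τ) :
    IsGood (k + m) (botInsert (zeroPos τ) k m B τ) := by
  obtain ⟨ha, h0, -⟩ := hone.zeroPos_spec hτ.toIsPermOn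
  have hmono := fun c l => hτ.mono_of_oneBeforeZero hone (c := c) (l := l)
  generalize zeroPos τ = z at *
  have mem := fun x hx => botInsert_mem_iff (i := x) hB.toIsPermOn hτ.toIsPermOn ha h0 hx
  refine ⟨isPermOn_botInsert hB.toIsPermOn hτ.toIsPermOn ha h0, ?_, ?_⟩
  · rintro i j c l hij hjc hcl hl ⟨h1, h2, h3, h4⟩
    have mi := mem i (by omega)
    have mj := mem j (by omega)
    have mc := mem c (by omega)
    have ml := mem l (by omega)
    by_cases hj : z ≤ j ∧ j ≤ z + k
    · by_cases hl' : z ≤ l ∧ l ≤ z + k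
      · have hc : z ≤ c ∧ c ≤ z + k := by omega
        have hi : z ≤ i ∧ i ≤ z + k := by omega
        have hiz : z ≠ i := fun h => by
          subst h
          rw [botInsert_self] at h1
          omega
        rw [botInsert_of_mem (i := i) (by omega) (by omega)] at h1 h3
        rw [botInsert_of_mem (i := j) (by omega) (by omega)] at h1 h2
        rw [botInsert_of_mem (i := c) (by omega) (by omega)] at h3 h4
        rw [botInsert_of_mem (i := l) (by omega) (by omega)] at h2 h4
        exact hB.four (i - z - 1) (j - z - 1) (c - z - 1) (l - z - 1) (by omega) (by omega)
          (by omega) (by omega) ⟨by omega, by omega, by omega, by omega⟩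
      · have hc : z + k < c := by omega
        have := hmono (c - k) (l - k) (by omega) (by omega) (by omega)
        rw [botInsert_of_gt hc (by omega), botInsert_of_gt (by omega) hl] at h4
        omega
    · have hi : ¬ (z ≤ i ∧ i ≤ z + k) := by omega
      have hc : ¬ (z ≤ c ∧ c ≤ z + k) := by omega
      have hl' : ¬ (z ≤ l ∧ l ≤ z + k) := by omega
      rw [botInsert_of_not_mem hi (by omega)] at h1 h3
      rw [botInsert_of_not_mem hj (by omega)] at h1 h2
      rw [botInsert_of_not_mem hc (by omega)] at h3 h4
      rw [botInsert_of_not_mem hl' (by omega)] at h2 h4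
      have := hτ.four (if i < z then i else i - k) (if j < z then j else j - k)
        (if c < z then c else c - k) (if l < z then l else l - k)
        (by split_ifs <;> omega) (by split_ifs <;> omega) (by split_ifs <;> omega)
        (by split_ifs <;> omega)
      omega
  · rintro a b c d e f hab hbc hcd hde hef hf ⟨h1, h2, h3, h4, h5⟩
    have ma := mem a (by omega)
    have mb := mem b (by omega)
    have mc := mem c (by omega)
    have md := mem d (by omega)
    have me := mem e (by omega)
    have mf := mem f (by omega)
    by_cases hf' : z ≤ f ∧ f ≤ z + k
    · have ha' : z ≤ a ∧ a ≤ z + k := by omega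
      have haz : z ≠ a := fun h => by
        subst h
        rw [botInsert_self] at h1
        omega
      rw [botInsert_of_mem (i := a) (by omega) (by omega)] at h1 h2
      rw [botInsert_of_mem (i := b) (by omega) (by omega)] at h3 h4
      rw [botInsert_of_mem (i := c) (by omega) (by omega)] at h5
      rw [botInsert_of_mem (i := d) (by omega) (by omega)] at h1
      rw [botInsert_of_mem (i := e) (by omega) (by omega)] at h2 h3
      rw [botInsert_of_mem (i := f) (by omega) (by omega)] at h4 h5
      exact hB.six (a - z - 1) (b - z - 1) (c - z - 1) (d - z - 1) (e - z - 1) (f - z - 1)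
        (by omega) (by omega) (by omega) (by omega) (by omega) (by omega)
        ⟨by omega, by omega, by omega, by omega, by omega⟩
    · have he : ¬ (z ≤ e ∧ e ≤ z + k) := by omega
      have hb : ¬ (z ≤ b ∧ b ≤ z + k) := by omega
      have hc : ¬ (z ≤ c ∧ c ≤ z + k) := by omega
      have ha' : ¬ (z ≤ a ∧ a ≤ z + k) := by omega
      rw [botInsert_of_not_mem ha' (by omega)] at h1 h2
      rw [botInsert_of_not_mem hb (by omega)] at h3 h4
      rw [botInsert_of_not_mem hc (by omega)] at h5
      rw [botInsert_of_not_mem he (by omega)] at h2 h3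
      rw [botInsert_of_not_mem hf' (by omega)] at h4 h5
      by_cases hd : z ≤ d ∧ d ≤ z + k
      · have := hτ.toIsPermOn.pos_of_ne ha h0 (i := if a < z then a else a - k)
          (by split_ifs <;> omega) (by split_ifs <;> omega)
        have := hτ.six (if a < z then a else a - k) (if b < z then b else b - k)
          (if c < z then c else c - k) z (if e < z then e else e - k) (if f < z then f else f - k)
          (by split_ifs <;> omega) (by split_ifs <;> omega) (by split_ifs <;> omega)
          (by split_ifs <;> omega) (by split_ifs <;> omega) (by split_ifs <;> omega)
        omega
      · rw [botInsert_of_not_mem hd (by omega)] at h1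
        have := hτ.six (if a < z then a else a - k) (if b < z then b else b - k)
          (if c < z then c else c - k) (if d < z then d else d - k) (if e < z then e else e - k)
          (if f < z then f else f - k)
          (by split_ifs <;> omega) (by split_ifs <;> omega) (by split_ifs <;> omega)
          (by split_ifs <;> omega) (by split_ifs <;> omega) (by split_ifs <;> omega)
        omega

theorem hasPrefix_botInsert {r : ℕ} (hB : IsPermOn k B) (hτ : IsGood m τ)
    (hone : OneBeforeZero m τ) (hpre : HasPrefix r m τ) :
    HasPrefix r (k + m) (botInsert (zeroPos τ) k m B τ) := by
  obtain ⟨ha, h0, i, hi, h1⟩ := hone.zeroPos_spec hτ.toIsPermOn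
  generalize zeroPos τ = z at *
  have hrz : r ≤ z := by
    by_contra hcon
    have := hpre.mono i z hi (by omega)
    omega
  refine ⟨by omega, fun i j hij hj => ?_, ?_⟩
  · rw [botInsert_of_lt (i := i) (by omega), botInsert_of_lt (by omega)]
    have := hpre.mono i j hij hj
    omega
  · rintro a b c d ha' hb hc hcd hd ⟨h1, h2, h3⟩
    have ma := botInsert_mem_iff (i := a) hB hτ.toIsPermOn ha h0 (by omega)
    have md := botInsert_mem_iff hB hτ.toIsPermOn ha h0 hd
    have hd' : ¬ (z ≤ d ∧ d ≤ z + k) := by omega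
    rw [botInsert_of_lt (i := a) (by omega)] at h1 h2
    rw [botInsert_of_lt (i := b) (by omega)] at h3
    rw [botInsert_of_not_mem hd' hd] at h2 h3
    by_cases hc' : z ≤ c ∧ c ≤ z + k
    · have := hτ.toIsPermOn.pos_of_ne ha h0 (i := a) (by omega) (by omega)
      have := hpre.sep a b z (if d < z then d else d - k) ha' hb hrz (by split_ifs <;> omega)
        (by split_ifs <;> omega)
      omega
    · rw [botInsert_of_not_mem hc' (by omega)] at h1
      have := hpre.sep a b (if c < z then c else c - k) (if d < z then d else d - k) ha' hb
        (by split_ifs <;> omega) (by split_ifs <;> omega) (by split_ifs <;> omega)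
      omega

end botInsert

theorem botInsert_injective {k m k' m' : ℕ} {B τ B' τ' : ℕ → ℕ} (hkm : k + m = k' + m')
    (hB : IsPermOn k B) (hτ : IsPermOn m τ) (hB' : IsPermOn k' B') (hτ' : IsPermOn m' τ')
    (hone : OneBeforeZero m τ) (hone' : OneBeforeZero m' τ')
    (heq : botInsert (zeroPos τ) k m B τ = botInsert (zeroPos τ') k' m' B' τ') :
    k = k' ∧ B = B' ∧ τ = τ' := by
  obtain ⟨ha, h0, i, hi, h1⟩ := hone.zeroPos_spec hτ
  obtain ⟨ha', h0', i', hi', h1'⟩ := hone'.zeroPos_spec hτ'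
  generalize zeroPos τ = z at *
  generalize hz' : zeroPos τ' = z' at *
  obtain rfl : z = z' := by
    refine (isPermOn_botInsert hB hτ ha h0).inj z z' (by omega) (by omega) ?_
    rw [botInsert_self, heq, botInsert_self]
  have hk : k = k' := by
    have e := congrFun heq i
    have e' := congrFun heq i'
    rw [botInsert_of_lt hi, botInsert_of_lt hi] at e
    rw [botInsert_of_lt hi', botInsert_of_lt hi'] at e'
    have := hτ.pos_of_ne ha h0 (i := i') (by omega) (by omega)
    have := hτ'.pos_of_ne ha' h0' (i := i) (by omega) (by omega)
    omega
  subst hk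
  obtain rfl : m = m' := by omega
  refine ⟨rfl, ?_, ?_⟩
  · funext j
    by_cases hj : j < k
    · have e := congrFun heq (z + 1 + j)
      rw [botInsert_of_mem (by omega) (by omega), botInsert_of_mem (by omega) (by omega),
        show z + 1 + j - z - 1 = j by omega] at e
      omega
    · rw [hB.eq_zero j (by omega), hB'.eq_zero j (by omega)]
  · funext j
    rcases lt_trichotomy j z with hj | rfl | hj
    · have e := congrFun heq j
      rw [botInsert_of_lt hj, botInsert_of_lt hj] at e
      omega
    · rw [h0, h0']
    · by_cases hjm : j < m
      · have e := congrFun heq (j + k)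
        rw [botInsert_of_gt (by omega) (by omega), botInsert_of_gt (by omega) (by omega),
          Nat.add_sub_cancel] at e
        omega
      · rw [hτ.eq_zero j (by omega), hτ'.eq_zero j (by omega)]

theorem exists_botInsert {r n : ℕ} {p : ℕ → ℕ} (hp : p ∈ goodSet (r + 1) (n + 1)) (hp0 : p 0 ≠ 0) :
    ∃ k m B τ, k + m = n + 1 ∧ B ∈ goodSet 0 k ∧ τ ∈ oneZeroSet (r + 1) m ∧
      botInsert (zeroPos τ) k m B τ = p := by
  obtain ⟨hp, hpre⟩ := hp
  obtain ⟨a, han, ha⟩ := hp.surj (v := 0) (by omega)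
  have ha0 : 0 < a := by
    by_contra hcon
    obtain rfl : a = 0 := by omega
    exact hp0 ha
  have hra : r + 1 ≤ a := by
    by_contra hcon
    have := hpre.mono 0 a ha0 (by omega)
    omega
  obtain ⟨i₀, hi₀, hmin⟩ := Finset.exists_min_image (Finset.range a) p ⟨0, by simpa using ha0⟩
  simp only [Finset.mem_range] at hi₀ hmin
  have hpi₀ := hp.toIsPermOn.pos_of_ne han ha (i := i₀) (by omega) (by omega)
  have hex : ∃ k, ¬ (a + 1 + k < n + 1 ∧ p (a + 1 + k) < p i₀) := ⟨n, by omega⟩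
  classical
  obtain ⟨k, hk, hrun⟩ : ∃ k, ¬ (a + 1 + k < n + 1 ∧ p (a + 1 + k) < p i₀) ∧
      ∀ i, i < k → a + 1 + i < n + 1 ∧ p (a + 1 + i) < p i₀ :=
    ⟨Nat.find hex, Nat.find_spec hex, fun i hi => not_not.mp (Nat.find_min hex hi)⟩
  have hakn : a + k < n + 1 := by
    rcases Nat.eq_zero_or_pos k with rfl | hk0
    · omega
    · have := (hrun (k - 1) (by omega)).1
      omega
  have hblock : ∀ i, a ≤ i → i ≤ a + k → p i < p i₀ := by
    intro i h1 h2
    rcases eq_or_lt_of_le h1 with rfl | h1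
    · omega
    · have := (hrun (i - a - 1) (by omega)).2
      rwa [show a + 1 + (i - a - 1) = i by omega] at this
  have hafter : ∀ j, a + k < j → j < n + 1 → p i₀ < p j := by
    intro j h1 h2
    have hne : ∀ x, a < x → x < n + 1 → p x ≠ p i₀ := fun x hx hxn h => by
      have := hp.inj x i₀ hxn (by omega) h
      omega
    have hnext := hne (a + 1 + k) (by omega) (by omega)
    have hj := hne j (by omega) h2
    have hj0 := hp.toIsPermOn.pos_of_ne han ha h2 (by omega)
    by_cases hjk : j = a + 1 + k
    · subst hjk
      omega
    · have := hp.four i₀ a (a + 1 + k) j hi₀ (by omega) (by omega) h2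
      omega
  have hcard : (Finset.range (n + 1) \ Finset.Icc a (a + k)).card = n - k := by
    rw [Finset.card_sdiff_of_subset (fun x hx => by simp at hx ⊢; omega)]
    simp
    omega
  obtain ⟨htop, hbot⟩ := hp.toIsPermOn.top_values
    (I := Finset.range (n + 1) \ Finset.Icc a (a + k)) Finset.sdiff_subset (by
      intro i hi j hj hjI
      simp only [Finset.mem_sdiff, Finset.mem_range, Finset.mem_Icc] at hi hjI
      have h1 := hblock j (by omega) (by omega)
      by_cases hia : i < a
      · have := hmin i hia
        omega
      · have := hafter i (by omega) hi.1
        omega)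
  simp only [hcard, Finset.mem_sdiff, Finset.mem_range, Finset.mem_Icc] at htop hbot
  have hout : ∀ i, i < n + 1 → ¬ (a ≤ i ∧ i ≤ a + k) → k < p i := fun i h1 h2 => by
    have := htop i ⟨h1, h2⟩
    omega
  have hin : ∀ i, a ≤ i → i ≤ a + k → p i ≤ k := fun i h1 h2 => by
    have := hbot i (by omega) (by omega)
    omega
  have hB : IsPermOn k fun i => if i < k then p (a + 1 + i) - 1 else 0 := by
    have hpos : ∀ i, i < k → 0 < p (a + 1 + i) := fun i hi =>
      hp.toIsPermOn.pos_of_ne han ha (by omega) (by omega)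
    refine ⟨fun i hi => ?_, fun i j hi hj h => ?_, fun i hi => ?_⟩
    · have := hin (a + 1 + i) (by omega) (by omega)
      have := hpos i hi
      simp only [hi, if_true]
      omega
    · have := hpos i hi
      have := hpos j hj
      simp only [hi, hj, if_true] at h
      have := hp.inj (a + 1 + i) (a + 1 + j) (by omega) (by omega) (by omega)
      omega
    · simp only [show ¬ i < k by omega, if_false]
  have hφ : ∀ i, i < n + 1 - k → i ≠ a → k < p (if i ≤ a then i else i + k) := fun i hi hia =>
    hout _ (by split_ifs <;> omega) (by split_ifs <;> omega)
  have hτ : IsPermOn (n + 1 - k) fun i => p (if i ≤ a then i else i + k) - k := by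
    refine ⟨fun i hi => ?_, fun i j hi hj h => ?_, fun i hi => ?_⟩
    · have := hp.lt (if i ≤ a then i else i + k) (by split_ifs <;> omega)
      omega
    · have h1 := hφ i hi
      have h2 := hφ j hj
      by_cases hia : i = a
      · by_cases hja : j = a
        · omega
        · have := h2 hja
          simp only [hia, le_refl, if_true, ha] at h
          omega
      · have := h1 hia
        by_cases hja : j = a
        · simp only [hja, le_refl, if_true, ha] at h
          omega
        · have := h2 hja
          have := hp.inj _ _ (by split_ifs <;> omega) (by split_ifs <;> omega)
            (show p (if i ≤ a then i else i + k) = p (if j ≤ a then j else j + k) by omega)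
          split_ifs at this <;> omega
    · simp only [show ¬ i ≤ a by omega, if_false]
      rw [hp.eq_zero _ (by omega), Nat.zero_sub]
  have hzero : zeroPos (fun i => p (if i ≤ a then i else i + k) - k) = a :=
    hτ.zeroPos_eq (by omega) (by simp [ha])
  refine ⟨k, n + 1 - k, fun i => if i < k then p (a + 1 + i) - 1 else 0,
    fun i => p (if i ≤ a then i else i + k) - k, by omega, ⟨?_, hasPrefix_zero _ _⟩,
    ⟨?_, ⟨by omega, ?_, ?_⟩, ?_⟩, ?_⟩
  · refine hp.of_embedding hB (fun i => a + 1 + i) (fun i j hij _ => by omega)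
      (fun i hi => by omega) (fun i j hi hj h => ?_)
    simp only [hi, hj, if_true] at h
    omega
  · exact hp.of_embedding hτ (fun i => if i ≤ a then i else i + k)
      (fun i j hij _ => by split_ifs <;> omega)
      (fun i hi => by split_ifs <;> omega) (fun i j hi hj h => by omega)
  · intro i j hij hj
    have := hpre.mono i j hij hj
    have := hout i (by omega) (by omega)
    simp only [show i ≤ a by omega, show j ≤ a by omega, if_true]
    omega
  · intro b c d e hb hc hd hde he h
    have := hpre.sep b c (if d ≤ a then d else d + k) (if e ≤ a then e else e + k) hb hc
      (by split_ifs <;> omega) (by split_ifs <;> omega) (by split_ifs <;> omega)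
    simp only [show b ≤ a by omega, show c ≤ a by omega, if_true] at h
    omega
  · obtain ⟨i, hi, h1⟩ := hτ.surj (v := 1) (by omega)
    refine ⟨i, a, ?_, by omega, h1, by simp [ha]⟩
    by_contra hcon
    by_cases hia : i = a
    · simp [hia, ha] at h1
    · rw [if_neg (by omega)] at h1
      have := hafter (i + k) (by omega) (by omega)
      have := hout i₀ (by omega) (by omega)
      omega
  · rw [hzero]
    funext i
    rcases lt_trichotomy i a with hi | rfl | hi
    · have := hout i (by omega) (by omega)
      rw [botInsert_of_lt hi]
      simp only [hi.le, if_true]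
      omega
    · rw [botInsert_self, ha]
    · by_cases hik : i ≤ a + k
      · have := hp.toIsPermOn.pos_of_ne han ha (i := i) (by omega) (by omega)
        rw [botInsert_of_mem hi hik]
        simp only [show i - a - 1 < k by omega, if_true]
        rw [show a + 1 + (i - a - 1) = i by omega]
        omega
      · by_cases hin' : i < n + 1
        · have := hout i hin' (by omega)
          rw [botInsert_of_gt (by omega) (by omega)]
          simp only [show ¬ i - k ≤ a by omega, if_false]
          rw [show i - k + k = i by omega]
          omega
        · rw [(isPermOn_botInsert hB hτ (by omega) (by simp [ha])).eq_zero i (by omega),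
            hp.eq_zero i (by omega)]

theorem ncard_goodSet_first_ne_zero (r n : ℕ) :
    {p | p ∈ goodSet (r + 1) (n + 1) ∧ p 0 ≠ 0}.ncard =
      ∑ x ∈ Finset.HasAntidiagonal.antidiagonal (n + 1),
        (goodSet 0 x.1).ncard * (oneZeroSet (r + 1) x.2).ncard := by
  refine ncard_eq_sum_of_decomposition (n + 1) (goodSet_finite 0) (oneZeroSet_finite (r + 1))
    ((goodSet_finite _ _).subset fun _ h => h.1)
    (fun k m B τ => botInsert (zeroPos τ) k m B τ) ?_ ?_ ?_
  · rintro k m B τ hkm ⟨hB, -⟩ ⟨hτ, hpre, hone⟩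
    rw [← hkm]
    refine ⟨⟨isGood_botInsert hB hτ hone, hasPrefix_botInsert hB.toIsPermOn hτ hone hpre⟩, ?_⟩
    obtain ⟨ha, h0, i, hi, h1⟩ := hone.zeroPos_spec hτ.toIsPermOn
    have := hτ.toIsPermOn.pos_of_ne ha h0 (i := 0) (by omega) (by omega)
    rw [botInsert_of_lt (by omega)]
    omega
  · rintro k m B τ k' m' B' τ' hkm ⟨hB, -⟩ ⟨hτ, -, hone⟩ hkm' ⟨hB', -⟩ ⟨hτ', -, hone'⟩ heq
    exact botInsert_injective (by omega) hB.toIsPermOn hτ.toIsPermOn hB'.toIsPermOn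
      hτ'.toIsPermOn hone hone' heq
  · rintro p ⟨hp, hp0⟩
    exact exists_botInsert hp hp0

theorem ncard_goodSet (r n : ℕ) :
    (goodSet (r + 1) (n + 1)).ncard = (goodSet r n).ncard +
      ∑ x ∈ Finset.HasAntidiagonal.antidiagonal (n + 1),
        (goodSet 0 x.1).ncard * (oneZeroSet (r + 1) x.2).ncard := by
  have hfin := goodSet_finite (r + 1) (n + 1)
  rw [← ncard_goodSet_first_zero r n, ← ncard_goodSet_first_ne_zero r n,
    ← Set.ncard_union_eq ?_ (hfin.subset fun _ h => h.1) (hfin.subset fun _ h => h.1)]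
  · congr 1
    ext p
    simp only [Set.mem_union, Set.mem_ofPred_eq]
    tauto
  · rw [Set.disjoint_left]
    exact fun p h h' => h'.2 h.2

/-- A permutation of `Fin n` as a function on `ℕ`, extended by zero. -/
def permFun {n : ℕ} (π : Equiv.Perm (Fin n)) (i : ℕ) : ℕ :=
  if h : i < n then π ⟨i, h⟩ else 0

section permFun

variable {n : ℕ} {π : Equiv.Perm (Fin n)}

theorem permFun_coe (i : Fin n) : permFun π i = π i := by
  simp [permFun]

theorem isPermOn_permFun (π : Equiv.Perm (Fin n)) : IsPermOn n (permFun π) where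
  lt i hi := by simp [permFun, hi]
  inj i j hi hj h := by
    simp only [permFun, hi, hj, dif_pos] at h
    simpa using π.injective (Fin.ext h)
  eq_zero i hi := by simp [permFun, hi]

theorem permFun_injective : Function.Injective (permFun (n := n)) := by
  intro π ρ h
  ext i
  rw [← permFun_coe, h, permFun_coe]

theorem IsPermOn.exists_permFun {p : ℕ → ℕ} (hp : IsPermOn n p) :
    ∃ π : Equiv.Perm (Fin n), permFun π = p := by
  have hinj : Function.Injective fun i : Fin n => (⟨p i, hp.lt i i.2⟩ : Fin n) := fun i j h =>
    Fin.ext (hp.inj i j i.2 j.2 (congrArg Fin.val h))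
  refine ⟨Equiv.ofBijective _ (Finite.injective_iff_bijective.mp hinj), ?_⟩
  funext i
  by_cases hi : i < n
  · simp [permFun, hi]
  · simp [permFun, hi, hp.eq_zero i (by omega)]

theorem contains_2143_or_3142_iff :
    Contains π p2143 ∨ Contains π p3142 ↔
      ∃ i j k l : Fin n, i < j ∧ j < k ∧ k < l ∧ π j < π i ∧ π j < π l ∧ π i < π k ∧ π l < π k := by
  constructor
  · rintro (⟨f, hf, h⟩ | ⟨f, hf, h⟩)
    · exact ⟨f 0, f 1, f 2, f 3, hf (by decide), hf (by decide), hf (by decide),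
        (h 1 0).mp (by simp [p2143]), (h 1 3).mp (by simp [p2143]), (h 0 2).mp (by simp [p2143]),
        (h 3 2).mp (by simp [p2143])⟩
    · exact ⟨f 0, f 1, f 2, f 3, hf (by decide), hf (by decide), hf (by decide),
        (h 1 0).mp (by simp [p3142]), (h 1 3).mp (by simp [p3142]), (h 0 2).mp (by simp [p3142]),
        (h 3 2).mp (by simp [p3142])⟩
  · rintro ⟨i, j, k, l, hij, hjk, hkl, h1, h2, h3, h4⟩
    have hmono : StrictMono ![i, j, k, l] := by
      rw [Fin.strictMono_iff_lt_succ]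
      intro a
      fin_cases a
      · exact hij
      · exact hjk
      · exact hkl
    have hne : π i ≠ π l := fun h => by
      have := π.injective h
      omega
    rcases lt_or_gt_of_ne hne with hil | hil
    · refine Or.inl ⟨_, hmono, fun a b => ?_⟩
      fin_cases a <;> fin_cases b <;> simp [p2143] <;> omega
    · refine Or.inr ⟨_, hmono, fun a b => ?_⟩
      fin_cases a <;> fin_cases b <;> simp [p3142] <;> omega

theorem contains_246135_iff :
    Contains π p246135 ↔ ∃ a b c d e f : Fin n, a < b ∧ b < c ∧ c < d ∧ d < e ∧ e < f ∧
      π d < π a ∧ π a < π e ∧ π e < π b ∧ π b < π f ∧ π f < π c := by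
  constructor
  · rintro ⟨f, hf, h⟩
    exact ⟨f 0, f 1, f 2, f 3, f 4, f 5, hf (by decide), hf (by decide), hf (by decide),
      hf (by decide), hf (by decide), (h 3 0).mp (by simp [p246135]),
      (h 0 4).mp (by simp [p246135]), (h 4 1).mp (by simp [p246135]),
      (h 1 5).mp (by simp [p246135]), (h 5 2).mp (by simp [p246135])⟩
  · rintro ⟨a, b, c, d, e, f, hab, hbc, hcd, hde, hef, h1, h2, h3, h4, h5⟩
    refine ⟨![a, b, c, d, e, f], ?_, fun x y => ?_⟩
    · rw [Fin.strictMono_iff_lt_succ]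
      intro x
      fin_cases x
      · exact hab
      · exact hbc
      · exact hcd
      · exact hde
      · exact hef
    · fin_cases x <;> fin_cases y <;> simp [p246135] <;> omega

theorem isGood_permFun_iff :
    IsGood n (permFun π) ↔ Avoids π p2143 ∧ Avoids π p3142 ∧ Avoids π p246135 := by
  have hval : ∀ i (hi : i < n), permFun π i = π ⟨i, hi⟩ := fun i hi => permFun_coe ⟨i, hi⟩
  rw [← and_assoc, Avoids, Avoids, Avoids, ← not_or, contains_2143_or_3142_iff,
    contains_246135_iff]
  constructor
  · intro h
    constructor
    · rintro ⟨i, j, k, l, hij, hjk, hkl, hpat⟩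
      refine h.four i j k l hij hjk hkl l.2 ?_
      simpa only [permFun_coe, Fin.val_fin_lt] using hpat
    · rintro ⟨a, b, c, d, e, f, hab, hbc, hcd, hde, hef, hpat⟩
      refine h.six a b c d e f hab hbc hcd hde hef f.2 ?_
      simpa only [permFun_coe, Fin.val_fin_lt] using hpat
  · rintro ⟨h4, h6⟩
    refine ⟨isPermOn_permFun π, fun i j k l hij hjk hkl hl hpat => h4 ?_,
      fun a b c d e f hab hbc hcd hde hef hf hpat => h6 ?_⟩
    · refine ⟨⟨i, by omega⟩, ⟨j, by omega⟩, ⟨k, by omega⟩, ⟨l, hl⟩, hij, hjk, hkl, ?_⟩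
      rwa [hval i (by omega), hval j (by omega), hval k (by omega), hval l hl] at hpat
    · refine ⟨⟨a, by omega⟩, ⟨b, by omega⟩, ⟨c, by omega⟩, ⟨d, by omega⟩, ⟨e, by omega⟩, ⟨f, hf⟩,
        hab, hbc, hcd, hde, hef, ?_⟩
      rwa [hval a (by omega), hval b (by omega), hval c (by omega), hval d (by omega),
        hval e (by omega), hval f hf] at hpat

theorem card_avoiders (n : ℕ) :
    Nat.card {π : Equiv.Perm (Fin n) // Avoids π p2143 ∧ Avoids π p3142 ∧ Avoids π p246135} =
      (goodSet 0 n).ncard := by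
  refine Nat.card_congr (Equiv.ofBijective (fun π =>
    (⟨permFun π.1, isGood_permFun_iff.mpr π.2, hasPrefix_zero _ _⟩ : goodSet 0 n)) ⟨?_, ?_⟩)
  · intro π ρ h
    exact Subtype.ext (permFun_injective (congrArg Subtype.val h))
  · rintro ⟨p, hp, hpre⟩
    obtain ⟨π, rfl⟩ := hp.toIsPermOn.exists_permFun
    exact ⟨⟨π, isGood_permFun_iff.mp hp⟩, rfl⟩

end permFun

theorem ncard_goodSet_zero_zero : (goodSet 0 0).ncard = 1 := by
  rw [Set.ncard_eq_one]
  refine ⟨fun _ => 0, Set.eq_singleton_iff_unique_mem.mpr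
    ⟨⟨⟨⟨?_, ?_, ?_⟩, ?_, ?_⟩, hasPrefix_zero _ _⟩, ?_⟩⟩
  · omega
  · omega
  · exact fun _ _ => rfl
  · omega
  · omega
  · rintro p ⟨hp, -⟩
    funext i
    exact hp.eq_zero i (Nat.zero_le i)

theorem goodSet_zero_succ (n : ℕ) : goodSet 0 (n + 1) = goodSet 1 (n + 1) := by
  ext p
  exact ⟨fun h => ⟨h.1, hasPrefix_one (by omega) p⟩, fun h => ⟨h.1, hasPrefix_zero _ p⟩⟩

theorem goodSet_eq_empty {r n : ℕ} (h : n < r) : goodSet r n = ∅ := by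
  ext p
  simp only [Set.mem_empty_iff_false, iff_false]
  exact fun hp => absurd hp.2.le (by omega)

theorem oneZeroSet_eq_empty {r n : ℕ} (h : n < r ∨ n = 0) : oneZeroSet r n = ∅ := by
  ext p
  simp only [Set.mem_empty_iff_false, iff_false]
  rintro ⟨-, hpre, hone⟩
  have := hpre.le
  have := hone.two_le
  omega

theorem riseSet_eq_empty {r n : ℕ} (h : n < r ∨ n = 0) : riseSet r n = ∅ := by
  simp [riseSet, oneZeroSet_eq_empty h]

theorem lowRiseSet_eq_empty {r n : ℕ} (h : n < r ∨ n = 0) : lowRiseSet r n = ∅ := by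
  simp [lowRiseSet, riseSet_eq_empty h]

theorem av_2143_3142_246135_schroeder (n : ℕ) :
    Nat.card {π : Equiv.Perm (Fin (n + 1)) //
        Avoids π p2143 ∧ Avoids π p3142 ∧ Avoids π p246135} =
      ∑ k ∈ Finset.range (n + 1), Nat.choose (n + k) (n - k) * catalan k := by
  rw [card_avoiders]
  exact eq_schroederSum_of_recurrences (e := fun r n => (goodSet r n).ncard)
    (tm := fun r n => (oneZeroSet r n).ncard) (v := fun r n => (riseSet r n).ncard)
    (y := fun r n => (lowRiseSet r n).ncard) ncard_goodSet_zero_zero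
    (fun n => by rw [goodSet_zero_succ]) (fun r => by simp [goodSet_eq_empty (Nat.succ_pos r)])
    (fun r => by simp [oneZeroSet_eq_empty]) (fun r n h => by simp [riseSet_eq_empty (.inl h)])
    (fun r => by simp [lowRiseSet_eq_empty]) ncard_goodSet ncard_oneZeroSet ncard_riseSet
    ncard_lowRiseSet n
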